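/- arXiv:2404.04119 — 2 statements merged into one kernel-verified Lean document; each statement's English description precedes it below -/
import Mathlib

section
/- Let X and Y be real Banach spaces and F : ℝ × X → Y a C¹ map. Assume: (1) for every (λ,u) ∈ ℝ × X the partial derivative D_u F(λ,u) : X → Y is a Fredholm operator of index 0; (2) F is proper on every closed bounded subset of ℝ × X; (3) u = u₀ is the unique solution of F(λ₀,u) = 0; (4) D_u F(λ₀,u₀) : X → Y is bijective. Then the set S contains a pair of unbounded connected components C⁺ and C⁻, contained in [λ₀,∞) × X and (−∞,λ₀] × X respectively, such that C⁺ ∩ C⁻ = {(λ₀,u₀)}. -/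
open Set Bornology

/-- A bounded linear operator between real normed spaces is Fredholm of index `0`:
its kernel is finite dimensional, its range is closed, and the dimension of the kernel
equals the (finite) codimension of the range. -/
def IsFredholmIndexZero {X Y : Type*} [NormedAddCommGroup X] [NormedSpace ℝ X]
    [NormedAddCommGroup Y] [NormedSpace ℝ Y] (T : X →L[ℝ] Y) : Prop :=
  FiniteDimensional ℝ (LinearMap.ker (T : X →ₗ[ℝ] Y)) ∧
  IsClosed (LinearMap.range (T : X →ₗ[ℝ] Y) : Set Y) ∧
  FiniteDimensional ℝ (Y ⧸ LinearMap.range (T : X →ₗ[ℝ] Y)) ∧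
  Module.finrank ℝ (LinearMap.ker (T : X →ₗ[ℝ] Y)) = Module.finrank ℝ (Y ⧸ LinearMap.range (T : X →ₗ[ℝ] Y))

/-!
If the component of the zero set over `[l₀, ∞)` through `(l₀, u₀)` were bounded, properness would
give a bounded open neighbourhood `O` of it in which the solutions of `F (l, u) = y`, for small `y`
in a finite-dimensional subspace `V` of `Y` transversal to all `D_u F (l, u)`, stay in a compact
set. The parity of the number of these solutions in `O`, for generic small `y ∈ V`, is then constant
in `l`; it is `1` at `l = l₀` and `0` as soon as `l` leaves the projection of `O`.

For fixed `l` the points `u` with `F (l, u) ∈ V` form a `C¹` manifold modelled on `V`, so genericity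
is Sard's theorem in equal dimensions. To compare two values `y₁, y₂ ∈ V`, move the value from `y₁`
to `y₂` one chart at a time, using bump functions; a compactly supported change in one chart
preserves the parity. Indeed the signed number of zeros of `h` in a compact set `K` is, up to a
positive factor, the integral over `K` of the Jacobian determinant of `R ∘ h`, for a map `R` with
`R 0 = 0` whose own Jacobian determinant is a bump function concentrated near `0`; for compactly
supported `h` the integral over the whole space is zero, so the integral over `K` depends only on
the values of `h` off `K`.
-/

open MeasureTheory Filter Topology

section JacobianIntegral

variable {E : Type*} [NormedAddCommGroup E] [NormedSpace ℝ E]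

theorem eventually_det_one_add_pos : ∀ᶠ A : E →L[ℝ] E in 𝓝 0, 0 < (1 + A).det := by
  have hcont : Continuous fun A : E →L[ℝ] E => (1 + A).det :=
    ContinuousLinearMap.continuous_det.comp (continuous_const.add continuous_id)
  exact hcont.continuousAt.eventually (lt_mem_nhds (by simp [ContinuousLinearMap.det]))

theorem det_smul_one_add {t : ℝ} (ht : t ≠ 0) (A : E →L[ℝ] E) :
    (t • 1 + A).det = t ^ Module.finrank ℝ E * (1 + t⁻¹ • A).det := by
  have h : t • 1 + A = t • (1 + t⁻¹ • A) := by rw [smul_add, smul_inv_smul₀ ht]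
  rw [h, ContinuousLinearMap.det, ContinuousLinearMap.det, ContinuousLinearMap.toLinearMap_smul,
    LinearMap.det_smul]

theorem bijective_id_add_of_lipschitzWith [CompleteSpace E] {G : E → E} {K : NNReal} (hK : K < 1)
    (hG : LipschitzWith K G) : Function.Bijective fun x => x + G x := by
  have happrox : ApproximatesLinearOn (fun x => x + G x)
      (ContinuousLinearEquiv.refl ℝ E : E →L[ℝ] E) univ K := by
    rw [ApproximatesLinearOn.approximatesLinearOn_iff_lipschitzOnWith, lipschitzOnWith_univ]
    convert hG using 1
    exact funext fun x => add_sub_cancel_left x (G x)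
  have hsmall : Subsingleton E ∨
      K < ‖((ContinuousLinearEquiv.refl ℝ E).symm : E →L[ℝ] E)‖₊⁻¹ := by
    rcases subsingleton_or_nontrivial E with h | h
    · exact Or.inl h
    · refine Or.inr (hK.trans_eq ?_)
      simp
  exact ⟨injOn_univ.1 (happrox.injOn hsmall), happrox.surjective hsmall⟩

variable [FiniteDimensional ℝ E]

theorem det_eq_sum_eval_basis_mul_det {s : Finset ℝ} (hs : Module.finrank ℝ E < s.card)
    (A : E →L[ℝ] E) :
    A.det = ∑ t ∈ s, (Lagrange.basis s id t).eval 0 * (t • 1 + A : E →L[ℝ] E).det := by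
  have heval : ∀ t : ℝ, (-(A : E →ₗ[ℝ] E)).charpoly.eval t = (t • 1 + A : E →L[ℝ] E).det := by
    intro t
    rw [LinearMap.eval_charpoly, sub_neg_eq_add, Algebra.algebraMap_eq_smul_one]
    rfl
  have hdeg : (-(A : E →ₗ[ℝ] E)).charpoly.degree < s.card := by
    refine Polynomial.degree_le_natDegree.trans_lt ?_
    rw [LinearMap.charpoly_natDegree]
    exact_mod_cast hs
  have h := congrArg (Polynomial.eval 0)
    (Lagrange.eq_interpolate_of_eval_eq (fun t => (t • 1 + A : E →L[ℝ] E).det) (injOn_id _) hdeg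
      fun t _ => heval t)
  rw [heval, zero_smul, zero_add, Lagrange.interpolate_apply, Polynomial.eval_finsetSum] at h
  simpa only [Polynomial.eval_mul, Polynomial.eval_C, mul_comm] using h

variable [MeasurableSpace E] [BorelSpace E] (μ : Measure E) [μ.IsAddHaarMeasure]
  {H : E → E} {B : Set E}

theorem setIntegral_det_one_add_fderiv {K : NNReal} (hK : K < 1) (hlip : LipschitzWith K H)
    (hH : Differentiable ℝ H) (hB : MeasurableSet B) (hsupp : ∀ x ∉ B, H x = 0)
    (hdet : ∀ x, 0 < (1 + fderiv ℝ H x : E →L[ℝ] E).det) :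
    ∫ x in B, (1 + fderiv ℝ H x : E →L[ℝ] E).det ∂μ = μ.real B := by
  have hbij := bijective_id_add_of_lipschitzWith hK hlip
  have himg : (fun x => x + H x) '' B = B := by
    have hfix : EqOn (fun x => x + H x) id Bᶜ := fun x hx => by simp [hsupp x hx]
    rw [← compl_inj_iff, ← image_compl_eq hbij, hfix.image_eq, image_id]
  have hderiv : ∀ x ∈ B,
      HasFDerivWithinAt (fun x => x + H x) (1 + fderiv ℝ H x : E →L[ℝ] E) B x :=
    fun x _ => ((hasFDerivAt_id x).add (hH x).hasFDerivAt).hasFDerivWithinAt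
  have h := integral_image_eq_integral_abs_det_fderiv_smul μ hB hderiv hbij.injective.injOn
    fun _ => (1 : ℝ)
  simp only [himg, smul_eq_mul, mul_one, abs_of_pos (hdet _)] at h
  rw [← h, setIntegral_const, smul_eq_mul, mul_one]

theorem eventually_setIntegral_det_smul_one_add_fderiv {K : NNReal} (hlip : LipschitzWith K H)
    (hH : Differentiable ℝ H) (hB : MeasurableSet B) (hsupp : ∀ x ∉ B, H x = 0) :
    ∀ᶠ t : ℝ in atTop, ∫ x in B, (t • 1 + fderiv ℝ H x : E →L[ℝ] E).det ∂μ =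
      t ^ Module.finrank ℝ E * μ.real B := by
  obtain ⟨δ, hδ, hball⟩ := Metric.eventually_nhds_iff.1 (eventually_det_one_add_pos (E := E))
  have hsmall : ∀ᶠ t : ℝ in atTop, t⁻¹ * K < min 1 δ := by
    have hlim : Tendsto (fun t : ℝ => t⁻¹ * K) atTop (𝓝 (0 * K)) :=
      tendsto_inv_atTop_zero.mul_const _
    rw [zero_mul] at hlim
    exact hlim.eventually (gt_mem_nhds (lt_min one_pos hδ))
  filter_upwards [hsmall, eventually_gt_atTop 0] with t ht ht0
  have hfderiv : ∀ x, fderiv ℝ (t⁻¹ • H) x = t⁻¹ • fderiv ℝ H x :=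
    fun x => fderiv_const_smul (hH x) _
  have hlip' : LipschitzWith (‖t⁻¹‖₊ * K) (t⁻¹ • H) := (lipschitzWith_smul t⁻¹).comp hlip
  have hcoe : ((‖t⁻¹‖₊ * K : NNReal) : ℝ) = t⁻¹ * K := by
    rw [NNReal.coe_mul, coe_nnnorm, Real.norm_of_nonneg (inv_nonneg.2 ht0.le)]
  have h := setIntegral_det_one_add_fderiv μ
    (by rw [← NNReal.coe_lt_coe, hcoe]; exact ht.trans_le (min_le_left _ _)) hlip'
    (hH.const_smul t⁻¹) hB (fun x hx => by rw [Pi.smul_apply, hsupp x hx, smul_zero]) fun x => by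
      apply hball
      rw [dist_zero_right]
      exact (norm_fderiv_le_of_lipschitz ℝ hlip').trans_lt
        (hcoe.trans_lt (ht.trans_le (min_le_right _ _)))
  simp only [hfderiv] at h
  simp only [det_smul_one_add ht0.ne', integral_const_mul, h]

-- For large `t` the map `t + H` permutes the support, so the integral of `det (t + DH)` over it is
-- that of `det (t + 0)`; interpolating the polynomial `det (t + A)` at `t = 0` transfers this
-- equality to `det DH` and `det 0`.
theorem integral_det_fderiv_eq_zero [Nontrivial E] (hH : ContDiff ℝ 1 H)
    (hc : HasCompactSupport H) : ∫ x, (fderiv ℝ H x).det ∂μ = 0 := by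
  obtain ⟨K, hlip⟩ := hH.lipschitzWith_of_hasCompactSupport hc one_ne_zero
  have hdet0 : (0 : E →L[ℝ] E).det = 0 := by simp [ContinuousLinearMap.det]
  have hzero : ∀ x ∉ tsupport H, (fderiv ℝ H x).det = 0 := fun x hx => by
    rw [image_eq_zero_of_notMem_tsupport fun h => hx (tsupport_fderiv_subset ℝ h), hdet0]
  obtain ⟨t₀, ht₀⟩ := eventually_atTop.1 (eventually_setIntegral_det_smul_one_add_fderiv μ hlip
    (hH.differentiable one_ne_zero) (isClosed_tsupport H).measurableSet
    fun x hx => image_eq_zero_of_notMem_tsupport hx)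
  obtain ⟨s, hs, hcard⟩ := (Ici_infinite t₀).exists_subset_card_eq (Module.finrank ℝ E + 1)
  have hs_card : Module.finrank ℝ E < s.card := by omega
  have hint : ∀ t : ℝ, IntegrableOn (fun x => (t • 1 + fderiv ℝ H x : E →L[ℝ] E).det)
      (tsupport H) μ := fun t => (ContinuousLinearMap.continuous_det.comp (continuous_const.add
    (hH.continuous_fderiv one_ne_zero))).continuousOn.integrableOn_compact hc
  calc ∫ x, (fderiv ℝ H x).det ∂μ = ∫ x in tsupport H, (fderiv ℝ H x).det ∂μ :=
        (setIntegral_eq_integral_of_forall_compl_eq_zero hzero).symm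
    _ = ∑ t ∈ s, (Lagrange.basis s id t).eval 0 *
          ∫ x in tsupport H, (t • 1 + fderiv ℝ H x : E →L[ℝ] E).det ∂μ := by
        simp only [det_eq_sum_eval_basis_mul_det hs_card (fderiv ℝ H _), ← integral_const_mul]
        exact integral_finsetSum _ fun t _ => (hint t).const_mul _
    _ = (0 : E →L[ℝ] E).det * μ.real (tsupport H) := by
        rw [det_eq_sum_eval_basis_mul_det hs_card, Finset.sum_mul]
        refine Finset.sum_congr rfl fun t ht => ?_
        rw [ht₀ t (hs ht), mul_assoc, add_zero, ContinuousLinearMap.det,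
          ContinuousLinearMap.toLinearMap_smul, LinearMap.det_smul]
        simp
    _ = 0 := by rw [hdet0, zero_mul]

end JacobianIntegral

section Bump

theorem exists_contDiff_det_fderiv_eq_prod {ι : Type*} [Fintype ι] {ρ : ℝ → ℝ}
    (hρ : Continuous ρ) :
    ∃ R : (ι → ℝ) → ι → ℝ, ContDiff ℝ 1 R ∧ R 0 = 0 ∧
      ∀ y, (fderiv ℝ R y).det = ∏ i, ρ (y i) := by
  classical
  let r : ℝ → ℝ := fun t => ∫ s in (0 : ℝ)..t, ρ s
  have hr : ∀ t, HasDerivAt r (ρ t) t := fun t =>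
    intervalIntegral.integral_hasDerivAt_right (hρ.intervalIntegrable _ _)
      (hρ.stronglyMeasurableAtFilter _ _) hρ.continuousAt
  have hr_contDiff : ContDiff ℝ 1 r := by
    rw [contDiff_one_iff_deriv, funext fun t => (hr t).deriv]
    exact ⟨fun t => (hr t).differentiableAt, hρ⟩
  have hderiv : ∀ y, HasFDerivAt (fun (y : ι → ℝ) i => r (y i)) (ContinuousLinearMap.pi fun i =>
      ρ (y i) • (ContinuousLinearMap.proj i : (ι → ℝ) →L[ℝ] ℝ)) y := fun y =>
    hasFDerivAt_pi.2 fun i =>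
      (hr (y i)).comp_hasFDerivAt (f := fun y : ι → ℝ => y i) y (hasFDerivAt_apply i y)
  refine ⟨fun y i => r (y i), contDiff_pi.2 fun i => hr_contDiff.comp (contDiff_apply ℝ ℝ i),
    funext fun i => by simp [r], fun y => ?_⟩
  rw [(hderiv y).fderiv, ContinuousLinearMap.det, ← LinearMap.det_toMatrix', ← Matrix.det_diagonal]
  congr 1
  ext i j
  simp [LinearMap.toMatrix'_apply, Matrix.diagonal_apply, Pi.single_apply]

variable {E : Type*} [NormedAddCommGroup E] [NormedSpace ℝ E]

theorem det_fderiv_conj {F : Type*} [NormedAddCommGroup F] [NormedSpace ℝ F] (L : E ≃L[ℝ] F)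
    {R : F → F} (hR : Differentiable ℝ R) (y : E) :
    (fderiv ℝ (fun x => L.symm (R (L x))) y).det = (fderiv ℝ R (L y)).det := by
  have h : HasFDerivAt (fun x => L.symm (R (L x)))
      ((L.symm : F →L[ℝ] E).comp ((fderiv ℝ R (L y)).comp (L : E →L[ℝ] F))) y :=
    L.symm.hasFDerivAt.comp y ((hR (L y)).hasFDerivAt.comp y L.hasFDerivAt)
  rw [h.fderiv]
  exact LinearMap.det_conj (fderiv ℝ R (L y) : F →ₗ[ℝ] F) L.symm.toLinearEquiv

theorem exists_contDiff_det_fderiv_bump [FiniteDimensional ℝ E] [MeasurableSpace E] [BorelSpace E]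
    (μ : Measure E) [μ.IsAddHaarMeasure] {δ : ℝ} (hδ : 0 < δ) :
    ∃ R : E → E, ContDiff ℝ 1 R ∧ R 0 = 0 ∧ (∀ y, δ ≤ ‖y‖ → (fderiv ℝ R y).det = 0) ∧
      0 < ∫ y, (fderiv ℝ R y).det ∂μ := by
  let L : E ≃L[ℝ] (Fin (Module.finrank ℝ E) → ℝ) := ContinuousLinearEquiv.ofFinrankEq (by simp)
  have hnear : ∀ᶠ x in 𝓝 0, ‖L.symm x‖ < δ :=
    L.symm.continuous.norm.continuousAt.eventually (gt_mem_nhds (by simpa using hδ))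
  obtain ⟨r, hr, hball⟩ := Metric.eventually_nhds_iff.1 hnear
  let ρ : ContDiffBump (0 : ℝ) := ⟨r / 2, r, half_pos hr, half_lt_self hr⟩
  obtain ⟨R, hR, hR0, hdet⟩ :=
    exists_contDiff_det_fderiv_eq_prod (ι := Fin (Module.finrank ℝ E)) ρ.continuous
  have hdet' : ∀ y, (fderiv ℝ (fun x => L.symm (R (L x))) y).det = ∏ i, ρ (L y i) := fun y => by
    rw [det_fderiv_conj L (hR.differentiable one_ne_zero), hdet]
  have hzero : ∀ y, δ ≤ ‖y‖ → ∏ i, ρ (L y i) = 0 := by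
    intro y hy
    obtain ⟨i, hi⟩ : ∃ i, r ≤ ‖L y i‖ := by
      by_contra! h
      have hLy := hball (y := L y) (by rwa [dist_zero_right, pi_norm_lt_iff hr])
      exact hLy.not_ge (by rwa [L.symm_apply_apply])
    exact Finset.prod_eq_zero (Finset.mem_univ i) (ρ.zero_of_le_dist (by simpa using hi))
  refine ⟨fun x => L.symm (R (L x)), L.symm.contDiff.comp (hR.comp L.contDiff), by simp [hR0],
    fun y hy => (hdet' y).trans (hzero y hy), ?_⟩
  simp only [hdet']
  refine Continuous.integral_pos_of_hasCompactSupport_nonneg_nonzero (x := 0)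
    (continuous_finsetProd _ fun i _ =>
      ρ.continuous.comp ((continuous_apply i).comp L.continuous)) ?_
    (fun y => Finset.prod_nonneg fun i _ => ρ.nonneg) ?_
  · exact HasCompactSupport.intro (isCompact_closedBall 0 δ) fun y hy =>
      hzero y (by simpa using (not_le.1 fun h => hy (by simpa using h)).le)
  · simp [ρ.one_of_mem_closedBall (Metric.mem_closedBall_self ρ.rIn_pos.le)]

end Bump

section ZeroCount

variable {E : Type*} [NormedAddCommGroup E] [NormedSpace ℝ E]

/-- `U` is an open neighbourhood of `z` which `h` maps injectively onto a neighbourhood of `h z`,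
with Jacobian determinant of constant sign: the situation of the inverse function theorem, which
makes `z` contribute to the signed count of preimages. -/
structure IsRegularNhd (h : E → E) (z : E) (U : Set E) : Prop where
  isOpen : IsOpen U
  mem : z ∈ U
  injOn : InjOn h U
  image_mem_nhds : h '' U ∈ 𝓝 (h z)
  sign_det_eq : ∀ x ∈ U, SignType.sign (fderiv ℝ h x).det = SignType.sign (fderiv ℝ h z).det

theorem eventually_sign_eq {α : Type*} [TopologicalSpace α] {f : α → ℝ} (hf : Continuous f) {z : α}
    (hz : f z ≠ 0) : ∀ᶠ x in 𝓝 z, SignType.sign (f x) = SignType.sign (f z) :=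
  ((continuousAt_sign_of_ne_zero hz).comp hf.continuousAt).preimage_mem_nhds
    ((isOpen_discrete {SignType.sign (f z)}).mem_nhds rfl)

theorem intCast_sum_sign_eq_card {ι : Type*} {s : Finset ι} {f : ι → ℝ} (hf : ∀ i ∈ s, f i ≠ 0) :
    ((∑ i ∈ s, (SignType.sign (f i) : ℤ) : ℤ) : ZMod 2) = s.card := by
  rw [Int.cast_sum, Finset.cast_card]
  refine Finset.sum_congr rfl fun i hi => ?_
  rcases (hf i hi).lt_or_gt with h | h
  · rw [sign_neg h]; decide
  · rw [sign_pos h]; decide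

theorem contDiff_smul_of_tsupport_subset {F : Type*} [NormedAddCommGroup F] [NormedSpace ℝ F]
    {n : WithTop ℕ∞} {η : E → ℝ} {h : E → F} {U : Set E} (hη : ContDiff ℝ n η) (hU : IsOpen U)
    (hηU : tsupport η ⊆ U) (hh : ContDiffOn ℝ n h U) : ContDiff ℝ n fun x => η x • h x := by
  refine contDiff_iff_contDiffAt.2 fun x => ?_
  by_cases hx : x ∈ tsupport η
  · exact hη.contDiffAt.smul (hh.contDiffAt (hU.mem_nhds (hηU hx)))
  · refine contDiffAt_const (c := (0 : F)) |>.congr_of_eventuallyEq ?_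
    filter_upwards [notMem_tsupport_iff_eventuallyEq.1 hx] with w hw
    rw [hw, Pi.zero_apply, zero_smul]

variable {h : E → E} {K : Set E}

theorem exists_pos_ball_subset_image (hcont : Continuous h) (hK : IsCompact K) {Z : Finset E}
    (hZ : (Z : Set E) = {x ∈ K | h x = 0}) {U : E → Set E}
    (hU : ∀ z ∈ Z, IsRegularNhd h z (U z)) :
    ∃ δ > 0, (∀ z ∈ Z, Metric.ball 0 δ ⊆ h '' U z) ∧
      ∀ x ∈ K \ ⋃ z ∈ Z, U z, δ ≤ ‖h x‖ := by
  have hmem : ∀ z, z ∈ Z ↔ z ∈ K ∧ h z = 0 := fun z => by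
    rw [← Finset.mem_coe, hZ, mem_ofPred_eq]
  have hball : ∀ᶠ δ : ℝ in 𝓝[>] 0, ∀ z ∈ Z, Metric.ball 0 δ ⊆ h '' U z := by
    rw [eventually_all_finset]
    intro z hz
    obtain ⟨δ, hδ, hb⟩ := Metric.mem_nhds_iff.1 (hU z hz).image_mem_nhds
    rw [((hmem z).1 hz).2] at hb
    filter_upwards [Ioo_mem_nhdsGT hδ] with d hd
    exact (Metric.ball_subset_ball hd.2.le).trans hb
  have hfar : IsClosed (h '' (K \ ⋃ z ∈ Z, U z)) :=
    ((hK.diff (isOpen_biUnion fun z hz => (hU z hz).isOpen)).image hcont).isClosed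
  have hzero : (0 : E) ∉ h '' (K \ ⋃ z ∈ Z, U z) := by
    rintro ⟨x, ⟨hxK, hxU⟩, hx⟩
    have hxZ := (hmem x).2 ⟨hxK, hx⟩
    exact hxU (mem_biUnion hxZ (hU x hxZ).mem)
  obtain ⟨δ, hδ, hδfar⟩ := Metric.mem_nhds_iff.1 (hfar.isOpen_compl.mem_nhds hzero)
  obtain ⟨d, hd, hdball⟩ := ((eventually_mem_set.2 (Ioo_mem_nhdsGT hδ)).and hball).exists
  refine ⟨d, hd.1, hdball, fun x hx => not_lt.1 fun hlt => ?_⟩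
  exact hδfar (by simpa using hlt.trans hd.2) (mem_image_of_mem h hx)

variable [FiniteDimensional ℝ E]

theorem finite_zeros_of_det_fderiv_ne_zero (hK : IsCompact K) (hcont : ContinuousOn h K)
    (hreg : ∀ z ∈ K, h z = 0 → DifferentiableAt ℝ h z ∧ (fderiv ℝ h z).det ≠ 0) :
    {x ∈ K | h x = 0}.Finite := by
  have hcompact : IsCompact {x ∈ K | h x = 0} :=
    hK.of_isClosed_subset
      (hcont.preimage_isClosed_of_isClosed hK.isClosed (isClosed_singleton (x := (0 : E))))
      inter_subset_left
  by_contra hinf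
  obtain ⟨z, ⟨hzK, hz⟩, hne⟩ := exists_nhds_ne_inf_principal_neBot hcompact hinf
  obtain ⟨hdiff, hdet⟩ := hreg z hzK hz
  have hanti := ((fderiv ℝ h z).toContinuousLinearEquivOfDetNeZero hdet).antilipschitz
  have hisolated := hdiff.hasFDerivAt.eventually_ne (c := 0) ⟨_, hanti⟩
  obtain ⟨x, hx, hxZ⟩ := ((hisolated.filter_mono inf_le_left).and
    ((eventually_mem_principal {x ∈ K | h x = 0}).filter_mono inf_le_right)).exists
  exact hx hxZ.2

theorem exists_isRegularNhd_subset (hh : ContDiff ℝ 1 h) {z : E} (hz : (fderiv ℝ h z).det ≠ 0)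
    {N : Set E} (hN : N ∈ 𝓝 z) : ∃ U ⊆ N, IsRegularNhd h z U := by
  have hstrict : HasStrictFDerivAt h
      ((fderiv ℝ h z).toContinuousLinearEquivOfDetNeZero hz : E →L[ℝ] E) z := by
    rw [ContinuousLinearMap.coe_toContinuousLinearEquivOfDetNeZero]
    exact hh.contDiffAt.hasStrictFDerivAt one_ne_zero
  let e := hstrict.toOpenPartialHomeomorph h
  have hsign := eventually_sign_eq
    (ContinuousLinearMap.continuous_det.comp (hh.continuous_fderiv one_ne_zero)) hz
  have hsource : e.source ∈ 𝓝 z :=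
    e.open_source.mem_nhds hstrict.mem_toOpenPartialHomeomorph_source
  obtain ⟨U, hU, hUo, hzU⟩ := mem_nhds_iff.1 (inter_mem (inter_mem hN hsign) hsource)
  have hUe : U ⊆ e.source := fun x hx => (hU hx).2
  exact ⟨U, fun x hx => (hU hx).1.1, hUo, hzU, e.injOn.mono hUe,
    (e.isOpen_image_of_subset_source hUo hUe).mem_nhds (mem_image_of_mem h hzU),
    fun x hx => (hU hx).1.2⟩

theorem exists_pairwiseDisjoint_isRegularNhd (hh : ContDiff ℝ 1 h) {Z : Finset E}
    (hreg : ∀ z ∈ Z, (fderiv ℝ h z).det ≠ 0) (hint : ∀ z ∈ Z, z ∈ interior K) :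
    ∃ U : E → Set E, (Z : Set E).PairwiseDisjoint U ∧
      ∀ z ∈ Z, U z ⊆ K ∧ IsRegularNhd h z (U z) := by
  obtain ⟨N, hN, hdisj⟩ := Z.finite_toSet.t2_separation
  have hU : ∀ z ∈ Z, ∃ U ⊆ N z ∩ K, IsRegularNhd h z U := fun z hz =>
    exists_isRegularNhd_subset hh (hreg z hz)
      (inter_mem ((hN z).2.mem_nhds (hN z).1) (mem_interior_iff_mem_nhds.1 (hint z hz)))
  choose! U hUsub hU using hU
  exact ⟨U, hdisj.mono_on fun z hz => (hUsub z hz).trans inter_subset_left,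
    fun z hz => ⟨(hUsub z hz).trans inter_subset_right, hU z hz⟩⟩

theorem exists_compact_nhd_zeros_subset {C U : Set E} (hC : IsCompact C) (hU : IsOpen U)
    (hCU : C ⊆ U) (hh : ContDiffOn ℝ 1 h U) (hreg : ∀ x ∈ U, h x = 0 → (fderiv ℝ h x).det ≠ 0) :
    ∃ K, IsCompact K ∧ C ⊆ interior K ∧ K ⊆ U ∧ ∀ x ∈ K, h x = 0 → x ∈ C := by
  obtain ⟨L, hL, hCL, hLU⟩ := exists_compact_between hC hU hCU
  have hfin : {x ∈ L | h x = 0}.Finite :=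
    finite_zeros_of_det_fderiv_ne_zero hL (hh.continuousOn.mono hLU) fun z hz h0 =>
      ⟨(hh.contDiffAt (hU.mem_nhds (hLU hz))).differentiableAt one_ne_zero, hreg z (hLU hz) h0⟩
  have hopen : IsOpen (interior L \ ({x ∈ L | h x = 0} \ C)) :=
    isOpen_interior.sdiff (hfin.subset sdiff_subset).isClosed
  obtain ⟨K, hK, hCK, hKL⟩ :=
    exists_compact_between hC hopen fun x hx => ⟨hCL hx, fun h => h.2 hx⟩
  refine ⟨K, hK, hCK, fun x hx => hLU (interior_subset (hKL hx).1), fun x hx h0 => ?_⟩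
  by_contra hxC
  exact (hKL hx).2 ⟨⟨interior_subset (hKL hx).1, h0⟩, hxC⟩

open scoped Manifold in
theorem exists_contDiff_cutoff {U : Set E} (hK : IsCompact K) (hU : IsOpen U) (hKU : K ⊆ U) :
    ∃ η : E → ℝ, ContDiff ℝ 1 η ∧ HasCompactSupport η ∧ tsupport η ⊆ U ∧
      (∀ x, η x ∈ Icc 0 1) ∧ ∀ x ∈ K, ∀ᶠ w in 𝓝 x, η w = 1 := by
  obtain ⟨L, hL, hKL, hLU⟩ := exists_compact_between hK hU hKU
  obtain ⟨η, hone, hzero, hIcc⟩ :=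
    exists_contMDiffMap_one_nhds_of_subset_interior (n := 1) 𝓘(ℝ, E) hK.isClosed hKL
  have hsupp : tsupport η ⊆ L :=
    closure_minimal (fun x hx => by_contra fun h => hx (hzero x h)) hL.isClosed
  exact ⟨η, η.contMDiff.contDiff, hL.of_isClosed_subset (isClosed_tsupport _) hsupp,
    hsupp.trans hLU, hIcc, fun x hx => hone.filter_mono (nhds_le_nhdsSet hx)⟩

section Integral

variable [MeasurableSpace E] [BorelSpace E] (μ : Measure E) [μ.IsAddHaarMeasure]

theorem setIntegral_comp_mul_det (hh : Differentiable ℝ h) {z : E} {U : Set E}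
    (hU : IsRegularNhd h z U) {ω : E → ℝ} (hω : ∀ y ∉ h '' U, ω y = 0) :
    ∫ x in U, ω (h x) * (fderiv ℝ h x).det ∂μ =
      SignType.sign (fderiv ℝ h z).det * ∫ y, ω y ∂μ := by
  have hcov := integral_image_eq_integral_abs_det_fderiv_smul μ hU.isOpen.measurableSet
    (fun x _ => (hh x).hasFDerivAt.hasFDerivWithinAt) hU.injOn ω
  rw [← setIntegral_eq_integral_of_forall_compl_eq_zero hω, hcov, ← integral_const_mul]
  refine setIntegral_congr_fun hU.isOpen.measurableSet fun x hx => ?_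
  change ω (h x) * (fderiv ℝ h x).det = _ * (|(fderiv ℝ h x).det| * ω (h x))
  rw [← hU.sign_det_eq x hx, ← mul_assoc, sign_mul_abs, mul_comm]

theorem exists_setIntegral_comp_mul_det_eq_sum_sign (hh : ContDiff ℝ 1 h) (hK : IsCompact K)
    {Z : Finset E} (hZ : (Z : Set E) = {x ∈ K | h x = 0}) (hint : ∀ z ∈ Z, z ∈ interior K)
    (hreg : ∀ z ∈ Z, (fderiv ℝ h z).det ≠ 0) :
    ∃ δ > 0, ∀ ω : E → ℝ, Continuous ω → (∀ y, δ ≤ ‖y‖ → ω y = 0) →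
      ∫ x in K, ω (h x) * (fderiv ℝ h x).det ∂μ =
        ((∑ z ∈ Z, (SignType.sign (fderiv ℝ h z).det : ℤ) : ℤ) : ℝ) * ∫ y, ω y ∂μ := by
  obtain ⟨U, hdisj, hU⟩ := exists_pairwiseDisjoint_isRegularNhd hh hreg hint
  obtain ⟨δ, hδ, hball, hfar⟩ :=
    exists_pos_ball_subset_image hh.continuous hK hZ fun z hz => (hU z hz).2
  refine ⟨δ, hδ, fun ω hωc hω => ?_⟩
  have hcont : Continuous fun x => ω (h x) * (fderiv ℝ h x).det := (hωc.comp hh.continuous).mul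
    (ContinuousLinearMap.continuous_det.comp (hh.continuous_fderiv one_ne_zero))
  calc ∫ x in K, ω (h x) * (fderiv ℝ h x).det ∂μ
      = ∫ x in ⋃ z ∈ Z, U z, ω (h x) * (fderiv ℝ h x).det ∂μ :=
        setIntegral_eq_of_subset_of_forall_sdiff_eq_zero hK.measurableSet
          (iUnion₂_subset fun z hz => (hU z hz).1)
          fun x hx => by rw [hω _ (hfar x hx), zero_mul]
    _ = ∑ z ∈ Z, ∫ x in U z, ω (h x) * (fderiv ℝ h x).det ∂μ :=
        integral_biUnion_finset Z (fun z hz => (hU z hz).2.isOpen.measurableSet) hdisj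
          fun z hz => (hcont.continuousOn.integrableOn_compact hK).mono_set (hU z hz).1
    _ = ∑ z ∈ Z, (SignType.sign (fderiv ℝ h z).det : ℝ) * ∫ y, ω y ∂μ := by
        refine Finset.sum_congr rfl fun z hz => setIntegral_comp_mul_det μ
          (hh.differentiable one_ne_zero) (hU z hz).2 fun y hy => hω y (not_lt.1 fun hlt => ?_)
        exact hy (hball z hz (by simpa using hlt))
    _ = _ := by
        rw [Int.cast_sum, Finset.sum_mul]
        refine Finset.sum_congr rfl fun z _ => ?_
        cases SignType.sign (fderiv ℝ h z).det <;> simp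

variable {R k : E → E}

theorem integrable_det_fderiv_comp_mul_det (hR : ContDiff ℝ 1 R) (hk : ContDiff ℝ 1 k)
    (hc : HasCompactSupport k) [Nontrivial E] :
    Integrable (fun x => (fderiv ℝ R (k x)).det * (fderiv ℝ k x).det) μ := by
  have hdet : ∀ {f : E → E}, ContDiff ℝ 1 f → Continuous fun x => (fderiv ℝ f x).det := fun hf =>
    ContinuousLinearMap.continuous_det.comp (hf.continuous_fderiv one_ne_zero)
  refine (((hdet hR).comp hk.continuous).mul (hdet hk)).integrable_of_hasCompactSupport ?_
  refine HasCompactSupport.mul_left ((hc.fderiv (𝕜 := ℝ)).comp_left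
    (g := fun A : E →L[ℝ] E => A.det) ?_)
  simp [ContinuousLinearMap.det]

theorem integral_det_fderiv_comp_mul_det_eq_zero [Nontrivial E] (hR : ContDiff ℝ 1 R)
    (hR0 : R 0 = 0) (hk : ContDiff ℝ 1 k) (hc : HasCompactSupport k) :
    ∫ x, (fderiv ℝ R (k x)).det * (fderiv ℝ k x).det ∂μ = 0 := by
  rw [← integral_det_fderiv_eq_zero μ (hR.comp hk) (hc.comp_left hR0)]
  refine integral_congr_ae (ae_of_all _ fun x => ?_)
  simp only
  rw [fderiv_comp x (hR.differentiable one_ne_zero _) (hk.differentiable one_ne_zero _)]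
  exact (LinearMap.det_comp _ _).symm

theorem setIntegral_det_fderiv_comp_mul_det_congr [Nontrivial E] {k₀ k₁ : E → E}
    (hR : ContDiff ℝ 1 R) (hR0 : R 0 = 0) (hk₀ : ContDiff ℝ 1 k₀) (hk₁ : ContDiff ℝ 1 k₁)
    (hc₀ : HasCompactSupport k₀) (hc₁ : HasCompactSupport k₁) (hK : IsClosed K)
    (heq : EqOn k₀ k₁ Kᶜ) :
    ∫ x in K, (fderiv ℝ R (k₀ x)).det * (fderiv ℝ k₀ x).det ∂μ =
      ∫ x in K, (fderiv ℝ R (k₁ x)).det * (fderiv ℝ k₁ x).det ∂μ := by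
  have hout : ∫ x in Kᶜ, (fderiv ℝ R (k₀ x)).det * (fderiv ℝ k₀ x).det ∂μ =
      ∫ x in Kᶜ, (fderiv ℝ R (k₁ x)).det * (fderiv ℝ k₁ x).det ∂μ := by
    refine setIntegral_congr_fun hK.measurableSet.compl fun x hx => ?_
    have hev : k₀ =ᶠ[𝓝 x] k₁ := heq.eventuallyEq_of_mem (hK.isOpen_compl.mem_nhds hx)
    simp only [hev.eq_of_nhds, hev.fderiv_eq]
  have htotal₀ := integral_add_compl hK.measurableSet
    (integrable_det_fderiv_comp_mul_det μ hR hk₀ hc₀)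
  have htotal₁ := integral_add_compl hK.measurableSet
    (integrable_det_fderiv_comp_mul_det μ hR hk₁ hc₁)
  rw [integral_det_fderiv_comp_mul_det_eq_zero μ hR hR0 hk₀ hc₀] at htotal₀
  rw [integral_det_fderiv_comp_mul_det_eq_zero μ hR hR0 hk₁ hc₁, ← hout] at htotal₁
  exact add_right_cancel (htotal₀.trans htotal₁.symm)

end Integral

theorem card_zeros_eq_of_hasCompactSupport {k₀ k₁ : E → E} (hk₀ : ContDiff ℝ 1 k₀)
    (hk₁ : ContDiff ℝ 1 k₁) (hc₀ : HasCompactSupport k₀) (hc₁ : HasCompactSupport k₁)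
    (hK : IsCompact K) (heq : EqOn k₀ k₁ Kᶜ) {Z₀ Z₁ : Finset E}
    (hZ₀ : (Z₀ : Set E) = {x ∈ K | k₀ x = 0}) (hZ₁ : (Z₁ : Set E) = {x ∈ K | k₁ x = 0})
    (hint₀ : ∀ x ∈ Z₀, x ∈ interior K) (hint₁ : ∀ x ∈ Z₁, x ∈ interior K)
    (hreg₀ : ∀ x ∈ Z₀, (fderiv ℝ k₀ x).det ≠ 0) (hreg₁ : ∀ x ∈ Z₁, (fderiv ℝ k₁ x).det ≠ 0) :
    (Z₀.card : ZMod 2) = Z₁.card := by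
  rcases subsingleton_or_nontrivial E with hE | hE
  · rw [Finset.coe_injective (hZ₀.trans ((Subsingleton.elim k₀ k₁) ▸ hZ₁.symm))]
  borelize E
  let μ : Measure E := Measure.addHaar
  obtain ⟨δ₀, hδ₀, hdeg₀⟩ :=
    exists_setIntegral_comp_mul_det_eq_sum_sign μ hk₀ hK hZ₀ hint₀ hreg₀
  obtain ⟨δ₁, hδ₁, hdeg₁⟩ :=
    exists_setIntegral_comp_mul_det_eq_sum_sign μ hk₁ hK hZ₁ hint₁ hreg₁
  obtain ⟨R, hR, hR0, hRzero, hRpos⟩ := exists_contDiff_det_fderiv_bump μ (lt_min hδ₀ hδ₁)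
  have hRcont : Continuous fun y => (fderiv ℝ R y).det :=
    ContinuousLinearMap.continuous_det.comp (hR.continuous_fderiv one_ne_zero)
  have h := setIntegral_det_fderiv_comp_mul_det_congr μ hR hR0 hk₀ hk₁ hc₀ hc₁ hK.isClosed heq
  rw [hdeg₀ _ hRcont fun y hy => hRzero y ((min_le_left _ _).trans hy),
    hdeg₁ _ hRcont fun y hy => hRzero y ((min_le_right _ _).trans hy)] at h
  rw [← intCast_sum_sign_eq_card hreg₀, ← intCast_sum_sign_eq_card hreg₁,
    Int.cast_injective (mul_right_cancel₀ hRpos.ne' h)]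

theorem exists_finset_zeros_smul_cutoff {C U : Set E} {η : E → ℝ} (hC : IsCompact C)
    (hU : IsOpen U) (hCU : C ⊆ U) (hCK : C ⊆ interior K) (hη : ∀ x ∈ K, ∀ᶠ w in 𝓝 x, η w = 1)
    (hh : ContDiffOn ℝ 1 h U) (hreg : ∀ x ∈ U, h x = 0 → (fderiv ℝ h x).det ≠ 0)
    (hzero : ∀ x ∈ K, h x = 0 → x ∈ C) :
    ∃ Z : Finset E, (Z : Set E) = {x ∈ C | h x = 0} ∧ (Z : Set E) = {x ∈ K | η x • h x = 0} ∧
      ∀ x ∈ Z, x ∈ interior K ∧ (fderiv ℝ (fun w => η w • h w) x).det ≠ 0 := by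
  have hloc : ∀ x ∈ K, (fun w => η w • h w) =ᶠ[𝓝 x] h := fun x hx => by
    filter_upwards [hη x hx] with w hw
    rw [hw, one_smul]
  have hfin : {x ∈ C | h x = 0}.Finite :=
    finite_zeros_of_det_fderiv_ne_zero hC (hh.continuousOn.mono hCU) fun z hz h0 =>
      ⟨(hh.contDiffAt (hU.mem_nhds (hCU hz))).differentiableAt one_ne_zero, hreg z (hCU hz) h0⟩
  have hsame : {x ∈ C | h x = 0} = {x ∈ K | η x • h x = 0} := by
    ext x
    refine ⟨fun hx => ⟨interior_subset (hCK hx.1), by rw [hx.2, smul_zero]⟩, fun hx => ?_⟩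
    have h0 : h x = 0 := (hloc x hx.1).eq_of_nhds ▸ hx.2
    exact ⟨hzero x hx.1 h0, h0⟩
  refine ⟨hfin.toFinset, hfin.coe_toFinset, hfin.coe_toFinset.trans hsame, fun x hx => ?_⟩
  obtain ⟨hxC, h0⟩ := hfin.mem_toFinset.1 hx
  rw [(hloc x (interior_subset (hCK hxC))).fderiv_eq]
  exact ⟨hCK hxC, hreg x (hCU hxC) h0⟩

theorem ncard_zeros_eq_of_eqOn_sdiff {h₀ h₁ : E → E} {C U : Set E} (hC : IsCompact C)
    (hU : IsOpen U) (hCU : C ⊆ U) (hh₀ : ContDiffOn ℝ 1 h₀ U) (hh₁ : ContDiffOn ℝ 1 h₁ U)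
    (heq : EqOn h₀ h₁ (U \ C)) (hreg₀ : ∀ x ∈ U, h₀ x = 0 → (fderiv ℝ h₀ x).det ≠ 0)
    (hreg₁ : ∀ x ∈ U, h₁ x = 0 → (fderiv ℝ h₁ x).det ≠ 0) :
    ({x ∈ C | h₀ x = 0}.ncard : ZMod 2) = {x ∈ C | h₁ x = 0}.ncard := by
  obtain ⟨K, hK, hCK, hKU, hzero₀⟩ := exists_compact_nhd_zeros_subset hC hU hCU hh₀ hreg₀
  obtain ⟨η, hη, hηc, hηU, -, hη1⟩ := exists_contDiff_cutoff hK hU hKU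
  have hzero₁ : ∀ x ∈ K, h₁ x = 0 → x ∈ C := fun x hx h0 => by_contra fun hxC =>
    hxC (hzero₀ x hx ((heq ⟨hKU hx, hxC⟩).trans h0))
  obtain ⟨Z₀, hZ₀, hZη₀, hZreg₀⟩ :=
    exists_finset_zeros_smul_cutoff hC hU hCU hCK hη1 hh₀ hreg₀ hzero₀
  obtain ⟨Z₁, hZ₁, hZη₁, hZreg₁⟩ :=
    exists_finset_zeros_smul_cutoff hC hU hCU hCK hη1 hh₁ hreg₁ hzero₁
  rw [← hZ₀, ← hZ₁, ncard_coe_finset, ncard_coe_finset]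
  refine card_zeros_eq_of_hasCompactSupport (contDiff_smul_of_tsupport_subset hη hU hηU hh₀)
    (contDiff_smul_of_tsupport_subset hη hU hηU hh₁) hηc.smul_right hηc.smul_right hK
    (fun x hx => ?_) hZη₀ hZη₁ (fun x hx => (hZreg₀ x hx).1) (fun x hx => (hZreg₁ x hx).1)
    (fun x hx => (hZreg₀ x hx).2) (fun x hx => (hZreg₁ x hx).2)
  by_cases hxU : x ∈ U
  · simp only [heq ⟨hxU, fun hxC => hx (interior_subset (hCK hxC))⟩]
  · simp only [image_eq_zero_of_notMem_tsupport fun h => hxU (hηU h), zero_smul]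

end ZeroCount

theorem exists_norm_lt_forall_regular_value {ι E : Type*} [Countable ι] [NormedAddCommGroup E]
    [NormedSpace ℝ E] [FiniteDimensional ℝ E] {h : ι → E → E} {B : ι → Set E}
    (hB : ∀ i, IsOpen (B i)) (hh : ∀ i, ContDiffOn ℝ 1 (h i) (B i)) {δ : ℝ} (hδ : 0 < δ) :
    ∃ e : E, ‖e‖ < δ ∧ ∀ i, ∀ x ∈ B i, h i x = e → (fderiv ℝ (h i) x).det ≠ 0 := by
  borelize E
  let μ : Measure E := Measure.addHaar
  let critical : ι → Set E := fun i => {x ∈ B i | (fderiv ℝ (h i) x).det = 0}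
  have sard : ∀ i, μ (h i '' critical i) = 0 := fun i =>
    addHaar_image_eq_zero_of_det_fderivWithin_eq_zero μ (fun x hx =>
      (((hh i).contDiffAt ((hB i).mem_nhds hx.1)).differentiableAt
        one_ne_zero).hasFDerivAt.hasFDerivWithinAt) fun x hx => hx.2
  obtain ⟨e, he, hne⟩ : ∃ e ∈ Metric.ball (0 : E) δ, e ∉ ⋃ i, h i '' critical i := by
    by_contra! hsub
    exact (Metric.measure_ball_pos μ 0 hδ).ne' (measure_mono_null hsub (measure_iUnion_null sard))
  exact ⟨e, mem_ball_zero_iff.1 he, fun i x hx hxe hdet =>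
    hne (mem_iUnion.2 ⟨i, x, ⟨hx, hdet⟩, hxe⟩)⟩

section SliceChart

variable {X E F : Type*} [NormedAddCommGroup X] [NormedSpace ℝ X] [NormedAddCommGroup E]
  [NormedSpace ℝ E] [NormedAddCommGroup F] [NormedSpace ℝ F] {M : Set X}

variable (E M) in
/-- A `C¹` chart, with model space `E`, of a subset `M` of a normed space: a parametrization of the
part of `M` in the open set `nbhd`, whose inverse is the restriction of a `C¹` map on `nbhd`. -/
structure SliceChart extends PartialEquiv E X where
  nbhd : Set X
  isOpen_nbhd : IsOpen nbhd
  isOpen_source : IsOpen source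
  target_eq : target = M ∩ nbhd
  contDiffOn_toFun : ContDiffOn ℝ 1 toFun source
  contDiffOn_invFun : ContDiffOn ℝ 1 invFun nbhd

instance : CoeFun (SliceChart E M) fun _ => E → X := ⟨fun c => c.toFun⟩

variable (E M) in
/-- A map on the ambient space is `C¹` along `M` if it is `C¹` in every slice chart of `M`. -/
def ContDiffAlong (g : X → F) : Prop :=
  ∀ c : SliceChart E M, ContDiffOn ℝ 1 (fun x => g (c x)) c.source

theorem contDiffAlong_of_contDiff {g : X → F} (hg : ContDiff ℝ 1 g) : ContDiffAlong E M g :=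
  fun c => hg.comp_contDiffOn c.contDiffOn_toFun

namespace SliceChart

theorem mem_of_mem_source (c : SliceChart E M) {x : E} (hx : x ∈ c.source) :
    c x ∈ M ∩ c.nbhd :=
  c.target_eq ▸ c.map_source hx

/-- A bump function of a slice chart: a function that is `C¹` along the subset, with values in the
unit interval, vanishing off the image of a compact part `core` of the model. -/
structure Bump (c : SliceChart E M) where
  toFun : X → ℝ
  core : Set E
  isCompact_core : IsCompact core
  core_subset : core ⊆ c.source
  contDiffAlong : ContDiffAlong E M toFun
  mem_Icc : ∀ u, toFun u ∈ Icc (0 : ℝ) 1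
  eq_zero : ∀ u ∈ M, u ∉ c '' core → toFun u = 0

instance (c : SliceChart E M) : CoeFun c.Bump fun _ => X → ℝ := ⟨fun b => b.toFun⟩

theorem indicator_eq_zero (c : SliceChart E M) {β : E → ℝ} {u : X} (hu : u ∈ M)
    (h : u ∉ c '' tsupport β) : c.nbhd.indicator (fun v => β (c.symm v)) u = 0 := by
  rw [indicator_apply_eq_zero]
  intro hN
  have hut : u ∈ c.target := c.target_eq ▸ ⟨hu, hN⟩
  exact image_eq_zero_of_notMem_tsupport fun hβ => h ⟨c.symm u, hβ, c.right_inv hut⟩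

theorem contDiffAlong_indicator (c : SliceChart E M) {β : E → ℝ} (hβ : ContDiff ℝ 1 β)
    (hsupp : HasCompactSupport β) (hsub : tsupport β ⊆ c.source) :
    ContDiffAlong E M (c.nbhd.indicator fun v => β (c.symm v)) := by
  intro d x hx
  refine ContDiffAt.contDiffWithinAt ?_
  have hdx := d.contDiffOn_toFun.contDiffAt (d.isOpen_source.mem_nhds hx)
  by_cases hN : d x ∈ c.nbhd
  · have hN' := c.isOpen_nbhd.mem_nhds hN
    refine ((hβ.contDiffAt.comp _ (c.contDiffOn_invFun.contDiffAt hN')).comp x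
      hdx).congr_of_eventuallyEq ?_
    filter_upwards [hdx.continuousAt.preimage_mem_nhds hN'] with z hz
    simp only [Function.comp_apply, indicator_of_mem (show d z ∈ c.nbhd from hz)]
    rfl
  · have hcore : IsClosed (c '' tsupport β) :=
      (hsupp.isCompact.image_of_continuousOn (c.contDiffOn_toFun.continuousOn.mono hsub)).isClosed
    have hdx' : d x ∈ (c '' tsupport β)ᶜ := by
      rintro ⟨z, hz, hzx⟩
      exact hN (hzx ▸ (c.mem_of_mem_source (hsub hz)).2)
    refine (contDiffAt_const (c := (0 : ℝ))).congr_of_eventuallyEq ?_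
    filter_upwards [hdx.continuousAt.preimage_mem_nhds (hcore.isOpen_compl.mem_nhds hdx'),
      d.isOpen_source.mem_nhds hx] with z hz hzd
    exact c.indicator_eq_zero (d.mem_of_mem_source hzd).1 hz

theorem Bump.mem_image_core {c : SliceChart E M} (b : c.Bump) {u : X} (hu : u ∈ M) (h : b u = 1) :
    u ∈ c '' b.core :=
  by_contra fun hn => zero_ne_one ((b.eq_zero u hu hn).symm.trans h)

theorem exists_bump [FiniteDimensional ℝ E] (c : SliceChart E M) {u : X} (hu : u ∈ M ∩ c.nbhd) :
    ∃ b : c.Bump, ∀ᶠ v in 𝓝[M] u, b v = 1 := by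
  have hut : u ∈ c.target := c.target_eq ▸ hu
  have hN := c.isOpen_nbhd.mem_nhds hu.2
  obtain ⟨β, hβ, hsupp, hsub, hIcc, hone⟩ := exists_contDiff_cutoff isCompact_singleton
    c.isOpen_source (singleton_subset_iff.2 (c.map_target hut))
  refine ⟨{
    toFun := c.nbhd.indicator fun v => β (c.symm v)
    core := tsupport β
    isCompact_core := hsupp.isCompact
    core_subset := hsub
    contDiffAlong := c.contDiffAlong_indicator hβ hsupp hsub
    mem_Icc := fun v => ?_
    eq_zero := fun v => c.indicator_eq_zero }, mem_nhdsWithin_of_mem_nhds ?_⟩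
  · by_cases hv : v ∈ c.nbhd
    · simpa only [indicator_of_mem hv] using hIcc _
    · simp only [indicator_of_notMem hv, left_mem_Icc, zero_le_one]
  · filter_upwards [hN, (c.contDiffOn_invFun.contDiffAt hN).continuousAt.eventually (hone _ rfl)]
      with v hv h1
    exact (indicator_of_mem hv _).trans h1

/-- `e` is a regular value of the local representative of `g` in the chart. -/
def IsRegularValue (c : SliceChart E M) (g : X → E) (e : E) : Prop :=
  ∀ x ∈ c.source, g (c x) = e → (fderiv ℝ (fun z => g (c z)) x).det ≠ 0

theorem fiber_inter_image (c : SliceChart E M) (g : X → E) (e : E) {C : Set E}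
    (hC : C ⊆ c.source) : {u ∈ M | g u = e} ∩ c '' C = c '' {x ∈ C | g (c x) = e} := by
  ext u
  constructor
  · rintro ⟨⟨_, hu⟩, x, hx, rfl⟩
    exact ⟨x, ⟨hx, hu⟩, rfl⟩
  · rintro ⟨x, ⟨hx, hu⟩, rfl⟩
    exact ⟨⟨(c.mem_of_mem_source (hC hx)).1, hu⟩, x, hx, rfl⟩

variable [FiniteDimensional ℝ E] {g g₀ g₁ : X → E} {e : E} {C : Set E}

theorem finite_fiber_inter_image (c : SliceChart E M) (hC : IsCompact C) (hCs : C ⊆ c.source)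
    (hg : ContDiffAlong E M g) (hreg : c.IsRegularValue g e) :
    ({u ∈ M | g u = e} ∩ c '' C).Finite := by
  rw [c.fiber_inter_image g e hCs]
  have hgc : ContDiffOn ℝ 1 (fun x => g (c x) - e) c.source := (hg c).sub contDiffOn_const
  have hfin := finite_zeros_of_det_fderiv_ne_zero hC (hgc.continuousOn.mono hCs) fun z hz h0 =>
    ⟨(hgc.contDiffAt (c.isOpen_source.mem_nhds (hCs hz))).differentiableAt one_ne_zero, by
      rw [fderiv_sub_const]
      exact hreg z (hCs hz) (sub_eq_zero.1 h0)⟩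
  simp only [sub_eq_zero] at hfin
  exact hfin.image _

theorem ncard_fiber_eq_of_eqOn (c : SliceChart E M) (hC : IsCompact C) (hCs : C ⊆ c.source)
    (hg₀ : ContDiffAlong E M g₀) (hg₁ : ContDiffAlong E M g₁) (heq : EqOn g₀ g₁ (M \ c '' C))
    (hreg₀ : c.IsRegularValue g₀ e) (hreg₁ : c.IsRegularValue g₁ e)
    (hfin₀ : {u ∈ M | g₀ u = e}.Finite) (hfin₁ : {u ∈ M | g₁ u = e}.Finite) :
    ({u ∈ M | g₀ u = e}.ncard : ZMod 2) = {u ∈ M | g₁ u = e}.ncard := by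
  have hinside : ({x ∈ C | g₀ (c x) = e}.ncard : ZMod 2) = {x ∈ C | g₁ (c x) = e}.ncard := by
    have h := ncard_zeros_eq_of_eqOn_sdiff (h₀ := fun x => g₀ (c x) - e)
      (h₁ := fun x => g₁ (c x) - e) hC c.isOpen_source hCs ((hg₀ c).sub contDiffOn_const)
      ((hg₁ c).sub contDiffOn_const) ?_ ?_ ?_
    · simpa only [sub_eq_zero] using h
    · intro x hx
      have hx' : c x ∉ c '' C := fun ⟨z, hz, hzx⟩ =>
        hx.2 (c.injOn (hCs hz) hx.1 hzx ▸ hz)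
      simp only [heq ⟨(c.mem_of_mem_source hx.1).1, hx'⟩]
    · simpa only [IsRegularValue, fderiv_sub_const, sub_eq_zero] using hreg₀
    · simpa only [IsRegularValue, fderiv_sub_const, sub_eq_zero] using hreg₁
  have houtside : {u ∈ M | g₀ u = e} \ c '' C = {u ∈ M | g₁ u = e} \ c '' C := by
    ext u
    refine and_congr_left fun hu => and_congr_right fun hM => ?_
    rw [heq ⟨hM, hu⟩]
  have hcard : ∀ g : X → E, (c '' {x ∈ C | g (c x) = e}).ncard = {x ∈ C | g (c x) = e}.ncard :=
    fun g => (c.injOn.mono fun x hx => hCs hx.1).ncard_image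
  rw [← ncard_inter_add_ncard_sdiff_eq_ncard _ (c '' C) hfin₀,
    ← ncard_inter_add_ncard_sdiff_eq_ncard _ (c '' C) hfin₁, houtside,
    c.fiber_inter_image g₀ e hCs, c.fiber_inter_image g₁ e hCs, hcard, hcard, Nat.cast_add,
    Nat.cast_add, hinside]

end SliceChart

section Interpolation

variable {ι : Type*} {c : ι → SliceChart E M}

/-- The map `f`, shifted by a value that moves from `y₁` to `y₂` by means of the bump functions
with index in `s`: it is `f - y₁` for `s = ∅`, and `f - y₂` where one of these functions is `1`. -/
def interpolant (b : ∀ i, (c i).Bump) (f : X → E) (y₁ y₂ : E) (s : Finset ι) (u : X) : E :=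
  f u - (y₂ + (∏ i ∈ s, (1 - b i u)) • (y₁ - y₂))

variable {b : ∀ i, (c i).Bump} {f : X → E} {y₁ y₂ e : E} {s : Finset ι} {i : ι} {u : X}

theorem interpolant_empty : interpolant b f y₁ y₂ ∅ u = f u - y₁ := by
  rw [interpolant, Finset.prod_empty, one_smul, add_sub_cancel]

theorem interpolant_of_eq_one (hi : i ∈ s) (hu : b i u = 1) :
    interpolant b f y₁ y₂ s u = f u - y₂ := by
  rw [interpolant, Finset.prod_eq_zero hi (sub_eq_zero.2 hu.symm), zero_smul, add_zero]

theorem interpolant_insert_of_eq_zero [DecidableEq ι] (hi : i ∉ s) (hu : b i u = 0) :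
    interpolant b f y₁ y₂ (insert i s) u = interpolant b f y₁ y₂ s u := by
  rw [interpolant, interpolant, Finset.prod_insert hi, hu, sub_zero, one_mul]

theorem contDiffAlong_interpolant (hf : ContDiffAlong E M f) :
    ContDiffAlong E M (interpolant b f y₁ y₂ s) := fun d =>
  (hf d).sub (contDiffOn_const.add ((contDiffOn_prod fun i _ =>
    contDiffOn_const.sub ((b i).contDiffAlong d)).smul contDiffOn_const))

theorem norm_lt_of_interpolant_eq {ε : ℝ} (h : interpolant b f y₁ y₂ s u = e)
    (he : ‖e‖ < ε - max ‖y₁‖ ‖y₂‖) : ‖f u‖ < ε := by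
  have hprod : ∏ i ∈ s, (1 - b i u) ∈ Icc (0 : ℝ) 1 :=
    ⟨Finset.prod_nonneg fun i _ => sub_nonneg.2 ((b i).mem_Icc u).2,
      Finset.prod_le_one (fun i _ => sub_nonneg.2 ((b i).mem_Icc u).2)
        fun i _ => sub_le_self _ ((b i).mem_Icc u).1⟩
  have hseg := (convex_closedBall (0 : E) (max ‖y₁‖ ‖y₂‖)).add_smul_sub_mem
    (mem_closedBall_zero_iff.2 (le_max_right _ _)) (mem_closedBall_zero_iff.2 (le_max_left _ _))
    hprod
  rw [mem_closedBall_zero_iff] at hseg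
  rw [← sub_add_cancel (f u) (y₂ + _), show f u - _ = e from h]
  linarith [norm_add_le e (y₂ + (∏ i ∈ s, (1 - b i u)) • (y₁ - y₂))]

variable [FiniteDimensional ℝ E]

theorem exists_forall_isRegularValue_interpolant [Finite ι] (b : ∀ i, (c i).Bump)
    (y₁ y₂ : E) (hf : ContDiffAlong E M f) {δ : ℝ} (hδ : 0 < δ) :
    ∃ e : E, ‖e‖ < δ ∧ ∀ s i, (c i).IsRegularValue (interpolant b f y₁ y₂ s) e := by
  obtain ⟨e, he, hreg⟩ := exists_norm_lt_forall_regular_value (ι := Finset ι × ι)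
    (h := fun p x => interpolant b f y₁ y₂ p.1 (c p.2 x)) (fun p => (c p.2).isOpen_source)
    (fun p => contDiffAlong_interpolant hf (c p.2)) hδ
  exact ⟨e, he, fun s i => hreg (s, i)⟩

theorem ncard_interpolant_fiber_eq (hf : ContDiffAlong E M f)
    (hreg : ∀ s i, (c i).IsRegularValue (interpolant b f y₁ y₂ s) e)
    (hfin : ∀ s, {u ∈ M | interpolant b f y₁ y₂ s u = e}.Finite) (s : Finset ι) :
    ({u ∈ M | f u - y₁ = e}.ncard : ZMod 2) =
      {u ∈ M | interpolant b f y₁ y₂ s u = e}.ncard := by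
  classical
  induction s using Finset.induction_on with
  | empty => simp only [interpolant_empty]
  | insert i s hi ih =>
    exact ih.trans ((c i).ncard_fiber_eq_of_eqOn (b i).isCompact_core (b i).core_subset
      (contDiffAlong_interpolant hf) (contDiffAlong_interpolant hf)
      (fun u hu => (interpolant_insert_of_eq_zero hi ((b i).eq_zero u hu.1 hu.2)).symm)
      (hreg _ i) (hreg _ i) (hfin _) (hfin _))

theorem finite_interpolant_fiber [Finite ι] (hf : ContDiffAlong E M f)
    (hreg : ∀ s i, (c i).IsRegularValue (interpolant b f y₁ y₂ s) e)
    (hcover : ∀ u ∈ M, interpolant b f y₁ y₂ s u = e → ∃ i, b i u = 1) :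
    {u ∈ M | interpolant b f y₁ y₂ s u = e}.Finite := by
  refine (finite_iUnion fun i => (c i).finite_fiber_inter_image (b i).isCompact_core
    (b i).core_subset (contDiffAlong_interpolant hf) (hreg s i)).subset fun u hu => ?_
  obtain ⟨i, hi⟩ := hcover u hu.1 hu.2
  exact mem_iUnion.2 ⟨i, hu, (b i).mem_image_core hu.1 hi⟩

end Interpolation

variable [FiniteDimensional ℝ E]

theorem exists_finite_bump_cover {K : Set X} (hK : IsCompact K) (hKM : K ⊆ M)
    (hchart : ∀ u ∈ M, ∃ c : SliceChart E M, u ∈ c.nbhd) :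
    ∃ (t : Finset K) (c : t → SliceChart E M) (b : ∀ i, (c i).Bump), ∀ u ∈ K, ∃ i, b i u = 1 := by
  choose c hc using fun u : K => hchart u (hKM u.2)
  choose b hb using fun u : K => (c u).exists_bump ⟨hKM u.2, hc u⟩
  obtain ⟨t, ht⟩ := hK.elim_nhdsWithin_subcover' (fun u hu => {v | b ⟨u, hu⟩ v = 1})
    fun u hu => nhdsWithin_mono u hKM (hb ⟨u, hu⟩)
  refine ⟨t, fun i => c i, fun i => b i, fun u hu => ?_⟩
  obtain ⟨v, hv, huv⟩ := mem_iUnion₂.1 (ht hu)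
  exact ⟨⟨v, hv⟩, huv⟩

theorem exists_regular_ncard_fiber_eq {f : X → E} (hf : ContDiffAlong E M f) {ε : ℝ}
    (hcpt : IsCompact {u ∈ M | ‖f u‖ ≤ ε}) (hchart : ∀ u ∈ M, ∃ c : SliceChart E M, u ∈ c.nbhd)
    {y₁ y₂ : E} (hy₁ : ‖y₁‖ < ε) (hy₂ : ‖y₂‖ < ε) {δ : ℝ} (hδ : 0 < δ) :
    ∃ e : E, ‖e‖ < δ ∧
      (∀ u ∈ M, f u = y₁ + e → ∃ c : SliceChart E M, u ∈ c.nbhd ∧ c.IsRegularValue f (y₁ + e)) ∧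
      ({u ∈ M | f u = y₁ + e}.ncard : ZMod 2) = {u ∈ M | f u = y₂ + e}.ncard := by
  obtain ⟨t, c, b, hcover⟩ := exists_finite_bump_cover hcpt (fun u hu => hu.1) hchart
  obtain ⟨e, he, hreg⟩ := exists_forall_isRegularValue_interpolant b y₁ y₂ hf
    (lt_min hδ (sub_pos.2 (max_lt hy₁ hy₂)))
  have he' : ‖e‖ < ε - max ‖y₁‖ ‖y₂‖ := he.trans_le (min_le_right _ _)
  have hone : ∀ s, ∀ u ∈ M, interpolant b f y₁ y₂ s u = e → ∃ i, b i u = 1 := fun s u hu h =>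
    hcover u ⟨hu, (norm_lt_of_interpolant_eq h he').le⟩
  have hstart : ∀ u, f u - y₁ = e ↔ f u = y₁ + e := fun u => sub_eq_iff_eq_add'
  have hend : ∀ u ∈ M, interpolant b f y₁ y₂ Finset.univ u = e ↔ f u = y₂ + e := fun u hu => by
    have hval : (∃ i, b i u = 1) → (interpolant b f y₁ y₂ Finset.univ u = e ↔ f u = y₂ + e) := by
      rintro ⟨i, hi⟩
      rw [interpolant_of_eq_one (Finset.mem_univ i) hi, sub_eq_iff_eq_add']
    refine ⟨fun h => (hval (hone _ u hu h)).1 h, fun h => (hval (hcover u ⟨hu, ?_⟩)).2 h⟩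
    rw [h]
    linarith [norm_add_le y₂ e, le_max_right ‖y₁‖ ‖y₂‖]
  refine ⟨e, he.trans_le (min_le_left _ _), fun u hu h => ?_, ?_⟩
  · obtain ⟨i, hi⟩ := hone ∅ u hu (interpolant_empty.trans ((hstart u).2 h))
    refine ⟨c i, ?_, ?_⟩
    · obtain ⟨x, hx, rfl⟩ := (b i).mem_image_core hu hi
      exact ((c i).mem_of_mem_source ((b i).core_subset hx)).2
    · simpa only [SliceChart.IsRegularValue, interpolant_empty, fderiv_sub_const, hstart]
        using hreg ∅ i
  · have hparity := ncard_interpolant_fiber_eq hf hreg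
      (fun s => finite_interpolant_fiber hf hreg (hone s)) Finset.univ
    simp only [hstart] at hparity
    rw [hparity, sep_ext_iff.2 hend]

end SliceChart

section Transversality

theorem finrank_comap_of_codisjoint {K X Y : Type*} [DivisionRing K] [AddCommGroup X] [Module K X]
    [AddCommGroup Y] [Module K Y] {T : X →ₗ[K] Y} [FiniteDimensional K T.ker]
    (hindex : Module.finrank K T.ker = Module.finrank K (Y ⧸ T.range)) {V : Submodule K Y}
    [FiniteDimensional K V] (hV : Codisjoint T.range V) :
    FiniteDimensional K (V.comap T) ∧ Module.finrank K (V.comap T) = Module.finrank K V := by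
  let φ : V.comap T →ₗ[K] V := T.restrict fun x hx => hx
  let q : V →ₗ[K] Y ⧸ T.range := T.range.mkQ ∘ₗ V.subtype
  have hker : φ.ker ≃ₗ[K] T.ker :=
    (LinearEquiv.ofEq _ _ (LinearMap.ker_restrict _)).trans
      (Submodule.comapSubtypeEquivOfLe (LinearMap.ker_le_comap T))
  have hq : q.range = ⊤ := LinearMap.range_eq_top.2 fun y => by
    obtain ⟨y, rfl⟩ := T.range.mkQ_surjective y
    obtain ⟨_, v, ⟨x, rfl⟩, hv, rfl⟩ := Submodule.codisjoint_iff_exists_add_eq.1 hV y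
    exact ⟨⟨v, hv⟩, (Submodule.Quotient.eq _).2 ⟨-x, by simp⟩⟩
  have hexact : q.ker = φ.range := by
    ext v
    rw [LinearMap.mem_ker, LinearMap.comp_apply, Submodule.mkQ_apply,
      Submodule.Quotient.mk_eq_zero]
    exact ⟨fun ⟨x, hx⟩ => ⟨⟨x, (hx ▸ v.2 : T x ∈ V)⟩, Subtype.ext hx⟩,
      fun ⟨x, hx⟩ => ⟨x, congrArg Subtype.val hx⟩⟩
  have : FiniteDimensional K φ.ker := hker.symm.finiteDimensional
  have : FiniteDimensional K (V.comap T ⧸ φ.ker) := φ.quotKerEquivRange.symm.finiteDimensional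
  refine ⟨Module.Finite.of_submodule_quotient φ.ker, ?_⟩
  have hrankφ := φ.finrank_range_add_finrank_ker
  have hrankq := q.finrank_range_add_finrank_ker
  rw [hq, finrank_top, hexact] at hrankq
  rw [hker.finrank_eq] at hrankφ
  lia

variable {X Y : Type*} [NormedAddCommGroup X] [NormedSpace ℝ X] [NormedAddCommGroup Y]
  [NormedSpace ℝ Y] {T : X →L[ℝ] Y} {V : Submodule ℝ Y} [FiniteDimensional ℝ V]

namespace IsFredholmIndexZero

theorem bijective_of_surjective (hT : IsFredholmIndexZero T) (hsurj : Function.Surjective T) :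
    Function.Bijective T := by
  have := hT.1
  have hrange : T.range = ⊤ := LinearMap.range_eq_top.2 hsurj
  have hker : Module.finrank ℝ T.ker = 0 := by
    rw [hT.2.2.2, hrange, Module.finrank_zero_of_subsingleton]
  exact ⟨LinearMap.ker_eq_bot.1 (Submodule.finrank_eq_zero.1 hker), hsurj⟩

theorem exists_equiv_add [CompleteSpace X] [CompleteSpace Y] (hT : IsFredholmIndexZero T)
    (hV : Codisjoint T.range V) :
    ∃ (R : X →L[ℝ] V) (e : X ≃L[ℝ] Y), (e : X →L[ℝ] Y) = T + V.subtypeL ∘L R := by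
  have := hT.1
  obtain ⟨_, hrank⟩ := finrank_comap_of_codisjoint hT.2.2.2 hV
  let φ : V.comap (T : X →ₗ[ℝ] Y) ≃L[ℝ] V := ContinuousLinearEquiv.ofFinrankEq hrank
  obtain ⟨p, hp⟩ :=
    Submodule.ClosedComplemented.of_finiteDimensional (𝕜 := ℝ) (V.comap (T : X →ₗ[ℝ] Y))
  let T' : V.comap (T : X →ₗ[ℝ] Y) →L[ℝ] V :=
    (T ∘L Submodule.subtypeL _).codRestrict V fun x => x.2
  let R : X →L[ℝ] V := ((φ : V.comap (T : X →ₗ[ℝ] Y) →L[ℝ] V) - T') ∘L p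
  have hR : ∀ x : V.comap (T : X →ₗ[ℝ] Y), T x + R x = φ x := fun x => by
    rw [show R x = φ x - T' x by simp only [R, ContinuousLinearMap.comp_apply, hp]; rfl]
    exact add_sub_cancel _ _
  refine ⟨R, ContinuousLinearEquiv.ofBijective (T + V.subtypeL ∘L R) ?_ ?_,
    ContinuousLinearEquiv.coe_ofBijective _ _ _⟩
  · refine LinearMap.ker_eq_bot'.2 fun x hx => ?_
    have hx' : T x + R x = 0 := hx
    have hTx : T x ∈ V := (eq_neg_of_add_eq_zero_left hx') ▸ V.neg_mem (R x).2
    have h0 : φ ⟨x, hTx⟩ = 0 := Subtype.ext ((hR ⟨x, hTx⟩).symm.trans hx')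
    exact congrArg Subtype.val ((map_eq_zero_iff φ φ.injective).1 h0)
  · refine LinearMap.range_eq_top.2 fun y => ?_
    obtain ⟨_, v, ⟨x, rfl⟩, hv, rfl⟩ := Submodule.codisjoint_iff_exists_add_eq.1 hV y
    let b := φ.symm (⟨v, hv⟩ - R x)
    refine ⟨x + b, ?_⟩
    have hb : T b + R b = v - R x := by
      rw [hR, φ.apply_symm_apply, Submodule.coe_sub]
    calc T (x + b) + R (x + b) = T x + R x + (T b + R b) := by
          rw [map_add, map_add, Submodule.coe_add]; abel
      _ = T x + v := by rw [hb]; abel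

theorem eventually_codisjoint [CompleteSpace X] [CompleteSpace Y] (hT : IsFredholmIndexZero T)
    (hV : Codisjoint T.range V) : ∀ᶠ S : X →L[ℝ] Y in 𝓝 T, Codisjoint S.range V := by
  obtain ⟨R, e, he⟩ := hT.exists_equiv_add hV
  have hcont : Continuous fun S : X →L[ℝ] Y => S + V.subtypeL ∘L R := by fun_prop
  filter_upwards [hcont.continuousAt.preimage_mem_nhds (he ▸ e.nhds)] with S ⟨e', he'⟩
  refine Submodule.codisjoint_iff_exists_add_eq.2 fun y =>
    ⟨S (e'.symm y), R (e'.symm y), ⟨_, rfl⟩, (R _).2, ?_⟩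
  exact (congrArg (fun L : X →L[ℝ] Y => L (e'.symm y)) he').symm.trans (e'.apply_symm_apply y)

end IsFredholmIndexZero

theorem exists_finiteDimensional_codisjoint [CompleteSpace X] [CompleteSpace Y] {Z : Type*}
    [TopologicalSpace Z] {T : Z → X →L[ℝ] Y} (hT : Continuous T)
    (hfred : ∀ z, IsFredholmIndexZero (T z)) {Q : Set Z} (hQ : IsCompact Q) :
    ∃ V : Submodule ℝ Y, FiniteDimensional ℝ V ∧ ∀ᶠ z in 𝓝ˢ Q, Codisjoint (T z).range V := by
  have hlocal : ∀ z, ∃ V : Submodule ℝ Y, FiniteDimensional ℝ V ∧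
      ∀ᶠ w in 𝓝 z, Codisjoint (T w).range V := fun z => by
    obtain ⟨V, hV⟩ := Submodule.exists_isCompl (T z).range
    have := (hfred z).2.2.1
    have hfin : FiniteDimensional ℝ V :=
      (Submodule.quotientEquivOfIsCompl _ _ hV).finiteDimensional
    exact ⟨V, hfin, hT.continuousAt.eventually ((hfred z).eventually_codisjoint hV.codisjoint)⟩
  choose V hfin hV using hlocal
  obtain ⟨t, -, ht⟩ := hQ.elim_nhds_subcover (fun z => interior {w | Codisjoint (T w).range (V z)})
    fun z _ => interior_mem_nhds.2 (hV z)
  refine ⟨t.sup V, Submodule.finiteDimensional_finset_sup t V,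
    mem_nhdsSet_iff_exists.2 ⟨_, isOpen_biUnion fun _ _ => isOpen_interior, ht, fun w hw => ?_⟩⟩
  obtain ⟨z, hz, hwz⟩ := mem_iUnion₂.1 hw
  exact (interior_subset hwz : Codisjoint (T w).range (V z)).mono_right (Finset.le_sup hz)

end Transversality

section SliceChart

variable {X Y : Type*} [NormedAddCommGroup X] [NormedSpace ℝ X] [NormedAddCommGroup Y]
  [NormedSpace ℝ Y] {V : Submodule ℝ Y} [FiniteDimensional ℝ V] {M : Set X} {G : X → Y}

theorem exists_sliceChart_of_openPartialHomeomorph {φ : OpenPartialHomeomorph X Y}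
    (hφ : ContDiffOn ℝ 1 φ φ.source) (hφsymm : ContDiffOn ℝ 1 φ.symm φ.target)
    (hM : ∀ u ∈ φ.source, u ∈ M ↔ φ u ∈ V) : ∃ c : SliceChart V M, c.nbhd = φ.source := by
  obtain ⟨π, hπ⟩ := Submodule.ClosedComplemented.of_finiteDimensional (𝕜 := ℝ) V
  have hright : ∀ v : V, (v : Y) ∈ φ.target → φ (φ.symm v) = v := fun v hv => φ.right_inv hv
  have hleft : ∀ u ∈ φ.source, u ∈ M → (π (φ u) : Y) = φ u := fun u hu huM =>
    congrArg Subtype.val (hπ ⟨φ u, (hM u hu).1 huM⟩)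
  exact ⟨{
    toFun := fun v => φ.symm v
    invFun := fun u => π (φ u)
    source := {v | (v : Y) ∈ φ.target}
    target := M ∩ φ.source
    map_source' := fun v hv =>
      ⟨(hM _ (φ.map_target hv)).2 (by rw [hright v hv]; exact v.2), φ.map_target hv⟩
    map_target' := fun u hu => by
      rw [mem_ofPred_eq, hleft u hu.2 hu.1]
      exact φ.map_source hu.2
    left_inv' := fun v hv => by rw [hright v hv, hπ]
    right_inv' := fun u hu => by rw [hleft u hu.2 hu.1, φ.left_inv hu.2]
    nbhd := φ.source
    isOpen_nbhd := φ.open_source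
    isOpen_source := φ.open_target.preimage continuous_subtype_val
    target_eq := rfl
    contDiffOn_toFun := hφsymm.comp V.subtypeL.contDiff.contDiffOn fun v hv => hv
    contDiffOn_invFun := π.contDiff.comp_contDiffOn hφ }, rfl⟩

theorem exists_sliceChart [CompleteSpace X] [CompleteSpace Y] (hG : ContDiff ℝ 1 G) {O : Set X}
    (hO : IsOpen O) {u : X} (hu : u ∈ O) (hfred : IsFredholmIndexZero (fderiv ℝ G u))
    (hV : Codisjoint (fderiv ℝ G u).range V) :
    ∃ c : SliceChart V {v ∈ O | G v ∈ V}, u ∈ c.nbhd := by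
  obtain ⟨R, e, he⟩ := hfred.exists_equiv_add hV
  let Ψ : X → Y := fun v => G v + R v
  have hΨ : ContDiff ℝ 1 Ψ := hG.add (V.subtypeL ∘L R).contDiff
  have hderiv : HasFDerivAt Ψ (e : X →L[ℝ] Y) u := by
    rw [he]
    exact (hG.differentiable one_ne_zero u).hasFDerivAt.add (V.subtypeL ∘L R).hasFDerivAt
  let ψ := hΨ.contDiffAt.toOpenPartialHomeomorph Ψ hderiv one_ne_zero
  have huψ : u ∈ ψ.source := hΨ.contDiffAt.mem_toOpenPartialHomeomorph_source hderiv one_ne_zero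
  have hψsymm : ContDiffAt ℝ 1 ψ.symm (Ψ u) := hΨ.contDiffAt.to_localInverse hderiv one_ne_zero
  let φ := (ψ.restrContDiff ℝ 1 (by simp)).restrOpen O hO
  obtain ⟨c, hc⟩ := exists_sliceChart_of_openPartialHomeomorph (φ := φ) (V := V)
    (M := {v ∈ O | G v ∈ V}) hΨ.contDiffOn
    ((ψ.contDiffOn_restrContDiff_target ℝ (by simp)).mono inter_subset_left)
    fun v hv => (and_iff_right hv.2).trans (V.add_mem_iff_left (R v).2).symm
  exact ⟨c, hc ▸ ⟨⟨huψ, hΨ.contDiffAt, hψsymm⟩, hu⟩⟩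

theorem SliceChart.surjective_fderiv_of_isRegularValue {c : SliceChart V M}
    (hG : ContDiff ℝ 1 G) (hGM : ∀ v ∈ M, G v ∈ V) {π : Y →L[ℝ] V} (hπ : ∀ v : V, π v = v)
    {e : V} (hreg : c.IsRegularValue (fun v => π (G v)) e) {u : X} (hu : u ∈ M ∩ c.nbhd)
    (hue : π (G u) = e) (hV : Codisjoint (fderiv ℝ G u).range V) :
    Function.Surjective (fderiv ℝ G u) := by
  obtain ⟨x, hx, rfl⟩ : u ∈ c '' c.source := by
    rw [c.image_source_eq_target, c.target_eq]
    exact hu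
  have hsource := c.isOpen_source.mem_nhds hx
  have hc := ((c.contDiffOn_toFun.contDiffAt hsource).differentiableAt one_ne_zero).hasFDerivAt
  set T := fderiv ℝ G (c x)
  set R := fderiv ℝ c x
  have hGc : HasFDerivAt (fun z => G (c z)) (T ∘L R) x :=
    (hG.differentiable one_ne_zero _).hasFDerivAt.comp x hc
  have hlocal : HasFDerivAt (fun z => π (G (c z))) (π ∘L T ∘L R) x := π.hasFDerivAt.comp x hGc
  have hfactor : T ∘L R = V.subtypeL ∘L π ∘L T ∘L R := by
    refine hGc.unique ((V.subtypeL.hasFDerivAt.comp x hlocal).congr_of_eventuallyEq ?_)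
    filter_upwards [hsource] with z hz
    exact (congrArg Subtype.val (hπ ⟨_, hGM _ (c.mem_of_mem_source hz).1⟩)).symm
  have honto : Function.Surjective (π ∘L T ∘L R) := by
    have hdet := hreg x hx hue
    rw [hlocal.fderiv] at hdet
    exact ((Module.End.isUnit_iff _).1
      ((LinearMap.isUnit_iff_isUnit_det _).2 (isUnit_iff_ne_zero.2 hdet))).surjective
  have hVT : V ≤ T.range := fun v hv => by
    obtain ⟨z, hz⟩ := honto ⟨v, hv⟩
    exact ⟨R z, (congrArg (fun L : V →L[ℝ] Y => L z) hfactor).trans (congrArg Subtype.val hz)⟩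
  exact LinearMap.range_eq_top.1 ((sup_eq_left.2 hVT).symm.trans hV.eq_top)

end SliceChart

section FiberCount

variable {A X : Type*} [TopologicalSpace A] [TopologicalSpace X] {S : Set (A × X)} {s : Set A}
  {a₀ : A}

theorem isCompact_fiber [T1Space A] (hS : IsCompact S) (a : A) : IsCompact {u | (a, u) ∈ S} := by
  have hclosed : IsClosed ((Prod.fst : A × X → A) ⁻¹' {a}) :=
    isClosed_singleton.preimage continuous_fst
  convert (hS.inter_right hclosed).image continuous_snd using 1
  ext u
  constructor
  · exact fun hu => ⟨(a, u), ⟨hu, rfl⟩, rfl⟩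
  · rintro ⟨⟨_, _⟩, ⟨hu, rfl⟩, rfl⟩
    exact hu

theorem eventually_fiber_subset [T2Space A] (hcpt : IsCompact (S ∩ s ×ˢ univ)) (ha₀ : a₀ ∈ s)
    {W : Set X} (hW : IsOpen W) (hsub : {u | (a₀, u) ∈ S} ⊆ W) :
    ∀ᶠ a in 𝓝[s] a₀, {u | (a, u) ∈ S} ⊆ W := by
  have hclosed : IsClosed (Prod.fst '' ((S ∩ s ×ˢ univ) \ Prod.snd ⁻¹' W)) :=
    ((hcpt.diff (hW.preimage continuous_snd)).image continuous_fst).isClosed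
  have ha₀' : a₀ ∉ Prod.fst '' ((S ∩ s ×ˢ univ) \ Prod.snd ⁻¹' W) := by
    rintro ⟨⟨_, u⟩, ⟨⟨hu, -⟩, huW⟩, rfl⟩
    exact huW (hsub hu)
  filter_upwards [mem_nhdsWithin_of_mem_nhds (hclosed.isOpen_compl.mem_nhds ha₀'),
    self_mem_nhdsWithin] with a ha has u hu
  by_contra huW
  exact ha ⟨(a, u), ⟨⟨hu, has, mem_univ u⟩, huW⟩, rfl⟩

variable {ψ : X → A → X}

theorem finite_fiber_of_isGraph [T2Space A] (hcpt : IsCompact (S ∩ s ×ˢ univ))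
    (ha₀ : a₀ ∈ s) (hgraph : ∀ u, (a₀, u) ∈ S → ∀ᶠ p in 𝓝 (a₀, u), p ∈ S ↔ ψ u p.1 = p.2) :
    {u | (a₀, u) ∈ S}.Finite := by
  have hfiber : IsCompact {u | (a₀, u) ∈ S} := by
    simpa only [mem_inter_iff, prodMk_mem_set_prod_eq, ha₀, mem_univ, and_true]
      using isCompact_fiber hcpt a₀
  refine hfiber.finite (.of_nhdsWithin fun u hu => le_pure_iff.2 ?_)
  have hline := (Continuous.prodMk_right a₀).continuousAt.eventually (hgraph u hu)
  have hψu : ψ u a₀ = u := hline.self_of_nhds.1 hu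
  filter_upwards [mem_nhdsWithin_of_mem_nhds hline, self_mem_nhdsWithin] with v hv hvS
  exact ((hv.1 hvS).symm.trans hψu : v = u)

theorem eventually_ncard_fiber_eq [T2Space A] [T2Space X] (hcpt : IsCompact (S ∩ s ×ˢ univ))
    (ha₀ : a₀ ∈ s) (hψ : ∀ u, (a₀, u) ∈ S → Tendsto (ψ u) (𝓝 a₀) (𝓝 u))
    (hgraph : ∀ u, (a₀, u) ∈ S → ∀ᶠ p in 𝓝 (a₀, u), p ∈ S ↔ ψ u p.1 = p.2) :
    ∀ᶠ a in 𝓝[s] a₀, {u | (a, u) ∈ S}.ncard = {u | (a₀, u) ∈ S}.ncard := by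
  have hfin := finite_fiber_of_isGraph hcpt ha₀ hgraph
  obtain ⟨U, hU, hdisj⟩ := hfin.t2_separation
  have hlocal : ∀ u ∈ {u | (a₀, u) ∈ S}, ∃ W, IsOpen W ∧ u ∈ W ∧ W ⊆ U u ∧
      ∀ᶠ a in 𝓝 a₀, ∀ v ∈ W, (a, v) ∈ S ↔ ψ u a = v := fun u hu => by
    have hgraph_u := hgraph u hu
    rw [nhds_prod_eq] at hgraph_u
    obtain ⟨pa, hpa, pu, hpu, hiff⟩ := eventually_prod_iff.1 hgraph_u
    obtain ⟨W, hWsub, hW, huW⟩ := mem_nhds_iff.1 (inter_mem hpu ((hU u).2.mem_nhds (hU u).1))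
    exact ⟨W, hW, huW, fun v hv => (hWsub hv).2, hpa.mono fun a ha v hv => hiff ha (hWsub hv).1⟩
  choose! W hW huW hWU hSψ using hlocal
  have hψW : ∀ᶠ a in 𝓝 a₀, ∀ u ∈ {u | (a₀, u) ∈ S}, ψ u a ∈ W u :=
    (eventually_all_finite hfin).2 fun u hu => hψ u hu ((hW u hu).mem_nhds (huW u hu))
  have hcover := eventually_fiber_subset hcpt ha₀ (isOpen_biUnion hW)
    fun u hu => mem_biUnion hu (huW u hu)
  filter_upwards [hcover, mem_nhdsWithin_of_mem_nhds hψW,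
    mem_nhdsWithin_of_mem_nhds ((eventually_all_finite hfin).2 hSψ)] with a hcov hmem hiff
  have hinj : InjOn (fun u => ψ u a) {u | (a₀, u) ∈ S} := fun u hu v hv huv => by
    by_contra hne
    exact (hdisj hu hv hne).le_bot
      ⟨hWU u hu (hmem u hu), hWU v hv ((show ψ u a = ψ v a from huv) ▸ hmem v hv)⟩
  rw [← hinj.ncard_image]
  congr 1
  ext v
  constructor
  · intro hv
    obtain ⟨u, hu, hvu⟩ := mem_iUnion₂.1 (hcov hv)
    exact ⟨u, hu, (hiff u hu v hvu).1 hv⟩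
  · rintro ⟨u, hu, rfl⟩
    exact (hiff u hu _ (hmem u hu)).2 rfl

end FiberCount

section PartialDerivative

variable {X Y : Type*} [NormedAddCommGroup X] [NormedSpace ℝ X] [NormedAddCommGroup Y]
  [NormedSpace ℝ Y] {F : ℝ × X → Y}

theorem fderiv_partial_eq (hF : ContDiff ℝ 1 F) (p : ℝ × X) :
    fderiv ℝ (fun v => F (p.1, v)) p.2 = fderiv ℝ F p ∘L .inr ℝ ℝ X :=
  ((hF.differentiable one_ne_zero p).hasFDerivAt.comp p.2
    (hasFDerivAt_prodMk_right p.1 p.2)).fderiv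

theorem continuous_fderiv_partial (hF : ContDiff ℝ 1 F) :
    Continuous fun p : ℝ × X => fderiv ℝ (fun v => F (p.1, v)) p.2 := by
  simp only [fderiv_partial_eq hF]
  exact (hF.continuous_fderiv one_ne_zero).clm_comp continuous_const

theorem exists_implicitFunction [CompleteSpace X] [CompleteSpace Y] (hF : ContDiff ℝ 1 F)
    {V : Submodule ℝ Y} [CompleteSpace V] {l : ℝ} {y : V} {u : X} (hu : F (l, u) = y)
    (hbij : Function.Bijective (fderiv ℝ (fun v => F (l, v)) u)) :
    ∃ ψ : ℝ × V → X, Tendsto ψ (𝓝 (l, y)) (𝓝 u) ∧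
      ∀ᶠ p : (ℝ × V) × X in 𝓝 ((l, y), u), F (p.1.1, p.2) = p.1.2 ↔ ψ p.1 = p.2 := by
  let H : (ℝ × V) × X → Y := fun p => F (p.1.1, p.2) - p.1.2
  have hH : ContDiff ℝ 1 H := by
    refine (hF.comp ?_).sub (V.subtypeL.contDiff.comp ?_) <;> fun_prop
  have hderiv : HasStrictFDerivAt H (fderiv ℝ H ((l, y), u)) ((l, y), u) :=
    hH.contDiffAt.hasStrictFDerivAt one_ne_zero
  have hpartial : fderiv ℝ H ((l, y), u) ∘L .inr ℝ (ℝ × V) X = fderiv ℝ (fun v => F (l, v)) u := by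
    refine (hderiv.hasFDerivAt.comp u (hasFDerivAt_prodMk_right (l, y) u)).fderiv.symm.trans ?_
    exact fderiv_sub_const (𝕜 := ℝ) (f := fun v => F (l, v)) (y : Y)
  have hinv : (fderiv ℝ H ((l, y), u) ∘L .inr ℝ (ℝ × V) X).IsInvertible := by
    rw [hpartial]
    exact ⟨.ofBijective _ (LinearMap.ker_eq_bot.2 hbij.1) (LinearMap.range_eq_top.2 hbij.2),
      ContinuousLinearEquiv.coe_ofBijective _ _ _⟩
  refine ⟨hderiv.implicitFunctionOfProdDomain hinv,
    hderiv.tendsto_implicitFunctionOfProdDomain hinv, ?_⟩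
  filter_upwards [hderiv.eventually_apply_eq_iff_implicitFunctionOfProdDomain hinv] with p hp
  rw [← hp, show H ((l, y), u) = 0 from sub_eq_zero.2 hu, sub_eq_zero]

end PartialDerivative

section IsolatingBlock

variable {X Y : Type*} [NormedAddCommGroup X] [NormedSpace ℝ X] [NormedAddCommGroup Y]
  [NormedSpace ℝ Y] {F : ℝ × X → Y} {O : Set (ℝ × X)} {V : Submodule ℝ Y} {Λ : Set ℝ} {ε l : ℝ}

/-- The solutions `u` of `F (l, u) = y` with `(l, u)` in `O`. -/
def solutions (F : ℝ × X → Y) (O : Set (ℝ × X)) (l : ℝ) (y : Y) : Set X :=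
  {u | (l, u) ∈ O ∧ F (l, u) = y}

/-- An isolating block over the parameter set `Λ`: an open set on which the partial derivative of
`F` is transversal to `V`, and in which, over `Λ`, the equations `F (l, u) = y` with `y ∈ V` and
`‖y‖ ≤ ε` have a compact solution set. -/
structure IsolatingBlock (F : ℝ × X → Y) (Λ : Set ℝ) (V : Submodule ℝ Y) (ε : ℝ)
    (O : Set (ℝ × X)) : Prop where
  isOpen : IsOpen O
  codisjoint : ∀ p ∈ O, Codisjoint (fderiv ℝ (fun v => F (p.1, v)) p.2).range V
  isCompact : IsCompact {p ∈ O | p.1 ∈ Λ ∧ F p ∈ V ∧ ‖F p‖ ≤ ε}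

/-- The number of solutions in `O` at the parameter `l` has parity `k` for all values in some
nonempty open subset of the `ε`-ball of `V`. In an isolating block this determines `k`, the mod `2`
degree of `F (l, ·)`. -/
def HasGenericParity (F : ℝ × X → Y) (O : Set (ℝ × X)) (V : Submodule ℝ Y) (ε l : ℝ)
    (k : ZMod 2) : Prop :=
  (interior {y : V | ‖y‖ < ε ∧ ((solutions F O l y).ncard : ZMod 2) = k}).Nonempty

namespace IsolatingBlock

theorem isCompact_slice (hO : IsolatingBlock F Λ V ε O) (hl : l ∈ Λ) :
    IsCompact {u | (l, u) ∈ O ∧ F (l, u) ∈ V ∧ ‖F (l, u)‖ ≤ ε} := by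
  simpa only [mem_ofPred_eq, hl, true_and] using isCompact_fiber hO.isCompact l

variable [CompleteSpace X] [CompleteSpace Y] [FiniteDimensional ℝ V]

theorem exists_regular_ncard_solutions_eq (hO : IsolatingBlock F Λ V ε O) (hF : ContDiff ℝ 1 F)
    (hfred : ∀ l u, IsFredholmIndexZero (fderiv ℝ (fun v => F (l, v)) u)) (hl : l ∈ Λ) {y₁ y₂ : V}
    (hy₁ : ‖y₁‖ < ε) (hy₂ : ‖y₂‖ < ε) {δ : ℝ} (hδ : 0 < δ) :
    ∃ e : V, ‖e‖ < δ ∧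
      (∀ u ∈ solutions F O l ↑(y₁ + e), Function.Bijective (fderiv ℝ (fun v => F (l, v)) u)) ∧
      ((solutions F O l ↑(y₁ + e)).ncard : ZMod 2) = (solutions F O l ↑(y₂ + e)).ncard := by
  obtain ⟨π, hπ⟩ := Submodule.ClosedComplemented.of_finiteDimensional (𝕜 := ℝ) V
  let M : Set X := {u | (l, u) ∈ O ∧ F (l, u) ∈ V}
  have hG : ContDiff ℝ 1 fun v => F (l, v) := hF.comp (contDiff_prodMk_right l)
  have hπM : ∀ u ∈ M, (π (F (l, u)) : Y) = F (l, u) := fun u hu =>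
    congrArg Subtype.val (hπ ⟨F (l, u), hu.2⟩)
  have hfiber : ∀ y : V, {u ∈ M | π (F (l, u)) = y} = solutions F O l y := fun y => by
    ext u
    constructor
    · rintro ⟨hu, rfl⟩
      exact ⟨hu.1, (hπM u hu).symm⟩
    · rintro ⟨huO, hu⟩
      exact ⟨⟨huO, hu ▸ y.2⟩, by rw [hu, hπ]⟩
  have hcpt : IsCompact {u ∈ M | ‖π (F (l, u))‖ ≤ ε} := by
    convert hO.isCompact_slice hl using 1
    ext u
    constructor
    · rintro ⟨hu, hle⟩
      exact ⟨hu.1, hu.2, by rwa [← hπM u hu]⟩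
    · rintro ⟨huO, huV, hle⟩
      exact ⟨⟨huO, huV⟩, by rwa [← Submodule.norm_coe, hπM u ⟨huO, huV⟩]⟩
  obtain ⟨e, he, hreg, hparity⟩ := exists_regular_ncard_fiber_eq
    (contDiffAlong_of_contDiff (π.contDiff.comp hG)) hcpt
    (fun u hu => exists_sliceChart hG (hO.isOpen.preimage (.prodMk_right l)) hu.1 (hfred l u)
      (hO.codisjoint _ hu.1)) hy₁ hy₂ hδ
  refine ⟨e, he, fun u hu => (hfred l u).bijective_of_surjective ?_, ?_⟩
  · obtain ⟨huM, hπu⟩ := (hfiber _).superset hu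
    obtain ⟨c, huc, hc⟩ := hreg u huM hπu
    exact SliceChart.surjective_fderiv_of_isRegularValue hG (fun v hv => hv.2) hπ hc ⟨huM, huc⟩
      hπu (hO.codisjoint _ hu.1)
  · rwa [← hfiber, ← hfiber]

theorem genericParity_unique (hO : IsolatingBlock F Λ V ε O) (hF : ContDiff ℝ 1 F)
    (hfred : ∀ l u, IsFredholmIndexZero (fderiv ℝ (fun v => F (l, v)) u)) (hl : l ∈ Λ)
    {k₁ k₂ : ZMod 2} (h₁ : HasGenericParity F O V ε l k₁) (h₂ : HasGenericParity F O V ε l k₂) :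
    k₁ = k₂ := by
  obtain ⟨y₁, hy₁⟩ := h₁
  obtain ⟨y₂, hy₂⟩ := h₂
  obtain ⟨δ₁, hδ₁, hball₁⟩ := Metric.mem_nhds_iff.1 (mem_interior_iff_mem_nhds.1 hy₁)
  obtain ⟨δ₂, hδ₂, hball₂⟩ := Metric.mem_nhds_iff.1 (mem_interior_iff_mem_nhds.1 hy₂)
  obtain ⟨e, he, -, hparity⟩ := hO.exists_regular_ncard_solutions_eq hF hfred hl
    (interior_subset hy₁).1 (interior_subset hy₂).1 (lt_min hδ₁ hδ₂)
  have he₁ : y₁ + e ∈ Metric.ball y₁ δ₁ := by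
    simpa only [mem_ball_iff_norm, add_sub_cancel_left] using he.trans_le (min_le_left _ _)
  have he₂ : y₂ + e ∈ Metric.ball y₂ δ₂ := by
    simpa only [mem_ball_iff_norm, add_sub_cancel_left] using he.trans_le (min_le_right _ _)
  rw [← (hball₁ he₁).2, hparity, (hball₂ he₂).2]

theorem eventually_ncard_solutions_eq (hO : IsolatingBlock F Λ V ε O) (hF : ContDiff ℝ 1 F)
    (hl : l ∈ Λ) {y : V} (hy : ‖y‖ < ε)
    (hreg : ∀ u ∈ solutions F O l y, Function.Bijective (fderiv ℝ (fun v => F (l, v)) u)) :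
    ∀ᶠ a : ℝ × V in 𝓝[Λ ×ˢ Metric.closedBall 0 ε] (l, y),
      (solutions F O a.1 a.2).ncard = (solutions F O l y).ncard := by
  obtain ⟨π, hπ⟩ := Submodule.ClosedComplemented.of_finiteDimensional (𝕜 := ℝ) V
  let S : Set ((ℝ × V) × X) := {p | p.2 ∈ solutions F O p.1.1 p.1.2}
  have hcpt : IsCompact (S ∩ (Λ ×ˢ Metric.closedBall 0 ε) ×ˢ univ) := by
    have hcont : Continuous fun p : ℝ × X => ((p.1, π (F p)), p.2) := by
      have := hF.continuous
      fun_prop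
    convert hO.isCompact.image hcont using 1
    ext ⟨⟨l', z⟩, u⟩
    constructor
    · rintro ⟨⟨huO, hu⟩, ⟨hl', hz⟩, -⟩
      refine ⟨(l', u), ⟨huO, hl', hu ▸ z.2, hu ▸ mem_closedBall_zero_iff.1 hz⟩, ?_⟩
      simp only [hu, hπ]
    · rintro ⟨p, ⟨hpO, hpΛ, hpV, hpε⟩, hp⟩
      obtain ⟨⟨rfl, rfl⟩, rfl⟩ := hp
      have hπp : (π (F p) : Y) = F p := congrArg Subtype.val (hπ ⟨F p, hpV⟩)
      exact ⟨⟨hpO, hπp.symm⟩,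
        ⟨hpΛ, mem_closedBall_zero_iff.2 ((congrArg norm hπp).trans_le hpε)⟩, mem_univ _⟩
  choose! ψ hψ hgraph using fun u (hu : u ∈ solutions F O l y) =>
    exists_implicitFunction hF hu.2 (hreg u hu)
  refine eventually_ncard_fiber_eq (S := S) (ψ := ψ) hcpt
    ⟨hl, mem_closedBall_zero_iff.2 hy.le⟩ hψ fun u hu => ?_
  have hmemO : ∀ᶠ p : (ℝ × V) × X in 𝓝 ((l, y), u), (p.1.1, p.2) ∈ O :=
    (hO.isOpen.preimage (by fun_prop)).mem_nhds hu.1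
  filter_upwards [hgraph u hu, hmemO] with p hp hpO
  exact (and_iff_right hpO).trans hp

theorem eventually_hasGenericParity (hO : IsolatingBlock F Λ V ε O) (hF : ContDiff ℝ 1 F)
    (hl : l ∈ Λ) {y : V} (hy : ‖y‖ < ε)
    (hreg : ∀ u ∈ solutions F O l y, Function.Bijective (fderiv ℝ (fun v => F (l, v)) u)) :
    ∀ᶠ l' in 𝓝[Λ] l, HasGenericParity F O V ε l' (solutions F O l y).ncard := by
  have hball : ∀ᶠ z : V in 𝓝 y, ‖z‖ < ε := continuous_norm.continuousAt.eventually_lt_const hy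
  have hcount := hO.eventually_ncard_solutions_eq hF hl hy hreg
  have hnhds : Metric.closedBall 0 ε ∈ 𝓝 y := hball.mono fun z hz =>
    mem_closedBall_zero_iff.2 hz.le
  rw [nhdsWithin_prod_eq, nhdsWithin_eq_nhds.2 hnhds] at hcount
  obtain ⟨pl, hpl, py, hpy, hcount⟩ := eventually_prod_iff.1 hcount
  filter_upwards [hpl] with l' hl'
  refine ⟨y, mem_interior_iff_mem_nhds.2 ?_⟩
  filter_upwards [hball, hpy] with z hz hpz
  exact ⟨hz, congrArg Nat.cast (hcount hl' hpz)⟩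

theorem genericParity_eq_of_isPreconnected (hO : IsolatingBlock F Λ V ε O) (hF : ContDiff ℝ 1 F)
    (hfred : ∀ l u, IsFredholmIndexZero (fderiv ℝ (fun v => F (l, v)) u)) (hε : 0 < ε)
    (hΛ : IsPreconnected Λ) {l₁ l₂ : ℝ} (hl₁ : l₁ ∈ Λ) (hl₂ : l₂ ∈ Λ) {k₁ k₂ : ZMod 2}
    (h₁ : HasGenericParity F O V ε l₁ k₁) (h₂ : HasGenericParity F O V ε l₂ k₂) : k₁ = k₂ := by
  have hlocal : ∀ l ∈ Λ, ∃ k, ∀ᶠ l' in 𝓝[Λ] l, HasGenericParity F O V ε l' k := fun l hl => by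
    obtain ⟨e, he, hreg, -⟩ := hO.exists_regular_ncard_solutions_eq hF hfred hl
      (y₁ := 0) (y₂ := 0) (by simpa) (by simpa) hε
    rw [zero_add] at hreg
    exact ⟨_, hO.eventually_hasGenericParity hF hl he hreg⟩
  choose! k hk using hlocal
  have hself : ∀ l ∈ Λ, HasGenericParity F O V ε l (k l) := fun l hl =>
    (hk l hl).self_of_nhdsWithin hl
  have hcont : ContinuousOn k Λ := fun l hl => by
    refine tendsto_nhds_of_eventually_eq ?_
    filter_upwards [hk l hl, self_mem_nhdsWithin] with l' hl' hl'Λ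
    exact hO.genericParity_unique hF hfred hl'Λ (hself l' hl'Λ) hl'
  rw [hO.genericParity_unique hF hfred hl₁ h₁ (hself l₁ hl₁),
    hO.genericParity_unique hF hfred hl₂ h₂ (hself l₂ hl₂)]
  exact hΛ.constant hcont hl₁ hl₂

theorem subset_image_fst (hO : IsolatingBlock F Λ V ε O) (hF : ContDiff ℝ 1 F)
    (hfred : ∀ l u, IsFredholmIndexZero (fderiv ℝ (fun v => F (l, v)) u)) (hε : 0 < ε)
    (hΛ : IsPreconnected Λ) {l₀ : ℝ} (hl₀ : l₀ ∈ Λ) {u₀ : X} (hsol : solutions F O l₀ 0 = {u₀})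
    (hbij : Function.Bijective (fderiv ℝ (fun v => F (l₀, v)) u₀)) : Λ ⊆ Prod.fst '' O := by
  have hone : HasGenericParity F O V ε l₀ 1 := by
    have hzero : solutions F O l₀ ((0 : V) : Y) = {u₀} := hsol
    have hreg : ∀ u ∈ solutions F O l₀ ((0 : V) : Y),
        Function.Bijective (fderiv ℝ (fun v => F (l₀, v)) u) := by
      rw [hzero]
      rintro _ rfl
      exact hbij
    have hparity := (hO.eventually_hasGenericParity hF hl₀ (by simpa) hreg).self_of_nhdsWithin hl₀
    rwa [hzero, ncard_singleton, Nat.cast_one] at hparity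
  intro l hl
  by_contra hlO
  have hempty : ∀ y, solutions F O l y = ∅ := fun y =>
    eq_empty_of_forall_notMem fun u hu => hlO ⟨(l, u), hu.1, rfl⟩
  have hzero : HasGenericParity F O V ε l 0 := by
    refine ⟨0, mem_interior_iff_mem_nhds.2 ?_⟩
    filter_upwards [Metric.ball_mem_nhds 0 hε] with y hy
    exact ⟨mem_ball_zero_iff.1 hy, by rw [hempty, ncard_empty, Nat.cast_zero]⟩
  exact one_ne_zero (hO.genericParity_eq_of_isPreconnected hF hfred hε hΛ hl₀ hl hone hzero)

end IsolatingBlock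

end IsolatingBlock

section IsolatingNeighbourhood

theorem closure_sdiff_singleton_union {Z : Type*} [TopologicalSpace Z] {C : Set Z} (hC : IsClosed C)
    {p : Z} (hp : p ∈ C) : closure (C \ {p}) ∪ {p} = C :=
  (union_subset (closure_minimal sdiff_subset hC) (singleton_subset_iff.2 hp)).antisymm
    ((sdiff_union_of_subset (singleton_subset_iff.2 hp)).superset.trans
      (union_subset_union_left _ subset_closure))

theorem exists_clopen_of_connectedComponentIn_subset {Z : Type*} [TopologicalSpace Z] [T2Space Z]
    {K U : Set Z} (hK : IsCompact K) {p : Z} (hp : p ∈ K) (hU : IsOpen U)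
    (hsub : connectedComponentIn K p ⊆ U) :
    ∃ Q ⊆ K, IsCompact Q ∧ IsCompact (K \ Q) ∧ p ∈ Q ∧ Q ⊆ U := by
  have : CompactSpace K := isCompact_iff_compactSpace.1 hK
  rw [connectedComponentIn_eq_image hp, image_subset_iff, connectedComponent_eq_iInter_isClopen]
    at hsub
  have : Nonempty {s : Set K // IsClopen s ∧ (⟨p, hp⟩ : K) ∈ s} := ⟨univ, isClopen_univ, mem_univ _⟩
  obtain ⟨⟨s, hs, hps⟩, hsU⟩ := exists_subset_nhds_of_isCompact
    (V := fun s : {s : Set K // IsClopen s ∧ (⟨p, hp⟩ : K) ∈ s} => (s : Set K))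
    (U := ((↑) : K → Z) ⁻¹' U)
    (fun a b => ⟨⟨a ∩ b, a.2.1.inter b.2.1, a.2.2, b.2.2⟩, inter_subset_left, inter_subset_right⟩)
    (fun a => a.2.1.isClosed.isCompact)
    fun x hx => (hU.preimage continuous_subtype_val).mem_nhds (hsub hx)
  refine ⟨(↑) '' s, Subtype.coe_image_subset K s,
    hs.isClosed.isCompact.image continuous_subtype_val, ?_, ⟨_, hps, rfl⟩, image_subset_iff.2 hsU⟩
  have hcompl : K \ (↑) '' s = ((↑) : K → Z) '' sᶜ := by
    rw [image_compl_eq_range_sdiff_image Subtype.val_injective, Subtype.range_coe]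
  rw [hcompl]
  exact hs.compl.isClosed.isCompact.image continuous_subtype_val

theorem exists_isCompact_isClosed_diff {M : Type*} [MetricSpace M] {Z : Set M} (hZ : IsClosed Z)
    {p : M} (hcpt : ∀ r, IsCompact (Z ∩ Metric.closedBall p r)) (hp : p ∈ Z)
    (hb : IsBounded (connectedComponentIn Z p)) : ∃ Q, IsCompact Q ∧ p ∈ Q ∧ IsClosed (Z \ Q) := by
  obtain ⟨r, hr⟩ := hb.subset_ball p
  have hpr : p ∈ Metric.ball p r := hr (mem_connectedComponentIn hp)
  obtain ⟨Q, -, hQ, hdiff, hpQ, hQball⟩ := exists_clopen_of_connectedComponentIn_subset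
    (hcpt r) ⟨hp, Metric.ball_subset_closedBall hpr⟩ Metric.isOpen_ball
    ((connectedComponentIn_mono _ inter_subset_left).trans hr)
  refine ⟨Q, hQ, hpQ, ?_⟩
  have hsplit : Z \ Q = (Z ∩ Metric.closedBall p r) \ Q ∪ Z \ Metric.ball p r := by
    have hball : Metric.ball p r ⊆ Metric.closedBall p r := Metric.ball_subset_closedBall
    grind
  rw [hsplit]
  exact hdiff.isClosed.union (hZ.sdiff Metric.isOpen_ball)

variable {X Y : Type*} [NormedAddCommGroup X] [NormedSpace ℝ X] [CompleteSpace X]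
  [NormedAddCommGroup Y] [NormedSpace ℝ Y] [CompleteSpace Y] {F : ℝ × X → Y}

theorem exists_isolatingBlock (hF : ContDiff ℝ 1 F)
    (hfred : ∀ l u, IsFredholmIndexZero (fderiv ℝ (fun v => F (l, v)) u))
    (hproper : ∀ B, IsClosed B → IsBounded B → ∀ K, IsCompact K → IsCompact (B ∩ F ⁻¹' K))
    {Λ : Set ℝ} (hΛ : IsClosed Λ) {Q : Set (ℝ × X)} (hQ : IsCompact Q)
    (hdiff : IsClosed ((F ⁻¹' {0} ∩ Λ ×ˢ univ) \ Q)) :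
    ∃ V : Submodule ℝ Y, FiniteDimensional ℝ V ∧ ∃ ε > 0, ∃ O, Q ⊆ O ∧ IsBounded O ∧
      IsolatingBlock F Λ V ε O := by
  obtain ⟨V, _, hV⟩ := exists_finiteDimensional_codisjoint (continuous_fderiv_partial hF)
    (fun p => hfred p.1 p.2) hQ
  obtain ⟨U, hU, hQU, hUV⟩ := mem_nhdsSet_iff_exists.1 hV
  obtain ⟨δ, hδ, hB⟩ := hQ.exists_cthickening_subset_open (hdiff.isOpen_compl.inter hU)
    fun p hp => ⟨fun h => h.2 hp, hQU hp⟩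
  let O := Metric.thickening δ Q
  have hOB : O ⊆ Metric.cthickening δ Q := Metric.thickening_subset_cthickening δ Q
  have hQO : Q ⊆ O := Metric.self_subset_thickening hδ Q
  let D := Metric.cthickening δ Q ∩ F ⁻¹' ((↑) '' Metric.closedBall (0 : V) 1) ∩ Λ ×ˢ univ
  have hD : IsCompact D := (hproper _ Metric.isClosed_cthickening hQ.isBounded.cthickening _
    ((isCompact_closedBall 0 1).image continuous_subtype_val)).inter_right (hΛ.prod isClosed_univ)
  have hpos : ∀ p ∈ D \ O, 0 < ‖F p‖ := by
    rintro p ⟨⟨⟨hpB, -⟩, hpΛ⟩, hpO⟩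
    exact norm_pos_iff.2 fun hp => (hB hpB).1 ⟨⟨hp, hpΛ⟩, fun hpQ => hpO (hQO hpQ)⟩
  obtain ⟨η, hη, hηD⟩ := (hD.diff Metric.isOpen_thickening).exists_forall_le'
    hF.continuous.norm.continuousOn hpos
  obtain ⟨ε, hε, hεmin⟩ := exists_between (lt_min one_pos hη)
  refine ⟨V, ‹_›, ε, hε, O, hQO, hQ.isBounded.cthickening.subset hOB, Metric.isOpen_thickening,
    fun p hp => hUV (hB (hOB hp)).2, ?_⟩
  have hle : IsClosed {p | ‖F p‖ ≤ ε} := isClosed_le hF.continuous.norm continuous_const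
  convert hD.inter_right hle using 1
  ext p
  constructor
  · rintro ⟨hpO, hpΛ, hpV, hpε⟩
    have hp1 : ‖F p‖ ≤ 1 := hpε.trans (hεmin.le.trans (min_le_left _ _))
    exact ⟨⟨⟨hOB hpO, ⟨F p, hpV⟩, mem_closedBall_zero_iff.2 hp1, rfl⟩, hpΛ, mem_univ _⟩, hpε⟩
  · rintro ⟨hpD, hpε⟩
    have hpO : p ∈ O := by
      by_contra hpO
      exact (hpε.trans_lt (hεmin.trans_le (min_le_right _ _))).not_ge (hηD p ⟨hpD, hpO⟩)
    obtain ⟨⟨-, v, -, hv⟩, hpΛ, -⟩ := hpD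
    exact ⟨hpO, hpΛ, hv ▸ v.2, hpε⟩

theorem isBounded_of_isBounded_connectedComponentIn (hF : ContDiff ℝ 1 F)
    (hfred : ∀ l u, IsFredholmIndexZero (fderiv ℝ (fun v => F (l, v)) u))
    (hproper : ∀ B, IsClosed B → IsBounded B → ∀ K, IsCompact K → IsCompact (B ∩ F ⁻¹' K))
    {l₀ : ℝ} {u₀ : X} (hunique : ∀ u, F (l₀, u) = 0 ↔ u = u₀)
    (hbij : Function.Bijective (fderiv ℝ (fun v => F (l₀, v)) u₀)) {Λ : Set ℝ} (hΛ : IsClosed Λ)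
    (hΛc : IsPreconnected Λ) (hl₀ : l₀ ∈ Λ)
    (hb : IsBounded (connectedComponentIn (F ⁻¹' {0} ∩ Λ ×ˢ univ) (l₀, u₀))) : IsBounded Λ := by
  have hΛX : IsClosed (Λ ×ˢ (univ : Set X)) := hΛ.prod isClosed_univ
  have hcpt : ∀ r, IsCompact (F ⁻¹' {0} ∩ Λ ×ˢ univ ∩ Metric.closedBall (l₀, u₀) r) := fun r => by
    rw [inter_comm, ← inter_assoc]
    exact (hproper _ Metric.isClosed_closedBall Metric.isBounded_closedBall _
      isCompact_singleton).inter_right hΛX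
  obtain ⟨Q, hQ, hp₀, hdiff⟩ := exists_isCompact_isClosed_diff
    ((isClosed_singleton.preimage hF.continuous).inter hΛX) hcpt
    ⟨(hunique u₀).2 rfl, hl₀, mem_univ _⟩ hb
  obtain ⟨V, _, ε, hε, O, hQO, hOb, hO⟩ := exists_isolatingBlock hF hfred hproper hΛ hQ hdiff
  have hsol : solutions F O l₀ 0 = {u₀} := by
    ext u
    refine ⟨fun hu => (hunique u).1 hu.2, ?_⟩
    rintro rfl
    exact ⟨hQO hp₀, (hunique u).2 rfl⟩
  exact hOb.image_fst.subset (hO.subset_image_fst hF hfred hε hΛc hl₀ hsol hbij)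

end IsolatingNeighbourhood

/-- Global continuation theorem for `C¹` Fredholm maps (Theorem 1). -/
theorem global_continuation_fredholm {X Y : Type*}
    [NormedAddCommGroup X] [NormedSpace ℝ X] [CompleteSpace X]
    [NormedAddCommGroup Y] [NormedSpace ℝ Y] [CompleteSpace Y]
    (F : ℝ × X → Y) (hF : ContDiff ℝ 1 F)
    (l₀ : ℝ) (u₀ : X)
    (hFred : ∀ l : ℝ, ∀ u : X, IsFredholmIndexZero (fderiv ℝ (fun v => F (l, v)) u))
    (hProper : ∀ B : Set (ℝ × X), IsClosed B → IsBounded B → ∀ K : Set Y, IsCompact K →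
      IsCompact (B ∩ F ⁻¹' K))
    (hUnique : ∀ u : X, F (l₀, u) = 0 ↔ u = u₀)
    (hBij : Function.Bijective (fderiv ℝ (fun v => F (l₀, v)) u₀)) :
    let S : Set (ℝ × X) :=
      closure {p : ℝ × X | F p = 0 ∧ p ≠ (l₀, u₀)} ∪ {(l₀, u₀)}
    let Cp : Set (ℝ × X) :=
      connectedComponentIn (S ∩ (Set.Ici l₀ ×ˢ (Set.univ : Set X))) (l₀, u₀)
    let Cm : Set (ℝ × X) :=
      connectedComponentIn (S ∩ (Set.Iic l₀ ×ˢ (Set.univ : Set X))) (l₀, u₀)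
    ¬ IsBounded Cp ∧ ¬ IsBounded Cm ∧ Cp ∩ Cm = {(l₀, u₀)} := by
  intro S Cp Cm
  have hS : S = F ⁻¹' {0} := closure_sdiff_singleton_union
    (isClosed_singleton.preimage hF.continuous) ((hUnique u₀).2 rfl)
  have hbounded : ∀ {Λ : Set ℝ}, IsClosed Λ → IsPreconnected Λ → l₀ ∈ Λ →
      IsBounded (connectedComponentIn (S ∩ Λ ×ˢ univ) (l₀, u₀)) → IsBounded Λ := by
    intro Λ hΛ hΛc hl₀
    rw [hS]
    exact isBounded_of_isBounded_connectedComponentIn hF hFred hProper hUnique hBij hΛ hΛc hl₀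
  refine ⟨fun hb => not_bddAbove_Ici l₀
      (hbounded isClosed_Ici isPreconnected_Ici self_mem_Ici hb).bddAbove,
    fun hb => not_bddBelow_Iic l₀
      (hbounded isClosed_Iic isPreconnected_Iic self_mem_Iic hb).bddBelow, ?_⟩
  refine Subset.antisymm ?_ (singleton_subset_iff.2
    ⟨mem_connectedComponentIn ⟨Or.inr rfl, self_mem_Ici, mem_univ _⟩,
      mem_connectedComponentIn ⟨Or.inr rfl, self_mem_Iic, mem_univ _⟩⟩)
  rintro ⟨l, u⟩ ⟨hp, hm⟩
  obtain ⟨hlu, hl, -⟩ := connectedComponentIn_subset _ _ hp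
  obtain rfl : l = l₀ := le_antisymm (connectedComponentIn_subset _ _ hm).2.1 hl
  rw [hS] at hlu
  exact Prod.ext rfl ((hUnique u).1 hlu)
end

section
/- Let X and Y be real Banach spaces, let Z be a connected topological space, and let T : Z → L(X,Y) be continuous with respect to the operator norm on the space L(X,Y) of bounded linear operators. Suppose that for every z ∈ Z the operator T(z) is Fredholm, i.e. its kernel is finite-dimensional and its range is closed with finite codimension in Y, and suppose that for some z₀ ∈ Z the operator T(z₀) has Fredholm index 0. Then T(z) has Fredholm index 0 for every z ∈ Z. -/
open Set

/-- A bounded linear operator between real normed spaces is Fredholm: its kernel is finite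
dimensional and its range is closed with finite codimension. -/
def IsFredholm {X Y : Type*} [NormedAddCommGroup X] [NormedSpace ℝ X]
    [NormedAddCommGroup Y] [NormedSpace ℝ Y] (T : X →L[ℝ] Y) : Prop :=
  FiniteDimensional ℝ (LinearMap.ker (T : X →ₗ[ℝ] Y)) ∧
  IsClosed (LinearMap.range (T : X →ₗ[ℝ] Y) : Set Y) ∧
  FiniteDimensional ℝ (Y ⧸ LinearMap.range (T : X →ₗ[ℝ] Y))

/-
Split the domain and the codomain of a Fredholm operator `T` into an essential part, on which `T`
is an isomorphism, and a finite-dimensional part. Since invertibility is an open condition, the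
block of `S` between the essential parts remains invertible for `S` near `T`. This block is `S`
composed with an inclusion and a projection, so additivity of the index expresses the index of `S`
through the dimensions of the two finite-dimensional parts, which do not depend on `S`.
-/

open Topology Module

section LinearAlgebra

variable {K V W : Type*} [DivisionRing K] [AddCommGroup V] [Module K V]
  [AddCommGroup W] [Module K W] {p p' : Submodule K V} {q q' : Submodule K W}

lemma index_subtype (h : IsCompl p p') : p.subtype.index = -(finrank K p' : ℤ) := by
  rw [LinearMap.index_of_injective p.injective_subtype, Submodule.range_subtype,
    (p.quotientEquivOfIsCompl p' h).finrank_eq]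

lemma index_projectionOnto (h : IsCompl p p') : (p.projectionOnto p' h).index = finrank K p' := by
  rw [LinearMap.index_of_surjective (Submodule.projectionOnto_surjective h),
    Submodule.ker_projectionOnto]

lemma index_projectionOnto_comp_comp_subtype (f : V →ₗ[K] W)
    [FiniteDimensional K f.ker] [FiniteDimensional K (W ⧸ f.range)]
    [FiniteDimensional K p'] [FiniteDimensional K q'] (hp : IsCompl p p') (hq : IsCompl q q') :
    (q.projectionOnto q' hq ∘ₗ f ∘ₗ p.subtype).index =
      f.index + finrank K q' - finrank K p' := by
  have : FiniteDimensional K p.subtype.ker := by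
    rw [Submodule.ker_subtype]; infer_instance
  have : FiniteDimensional K (V ⧸ p.subtype.range) := by
    rw [Submodule.range_subtype]; exact (p.quotientEquivOfIsCompl p' hp).symm.finiteDimensional
  have : FiniteDimensional K (q.projectionOnto q' hq).ker := by
    rwa [Submodule.ker_projectionOnto]
  have : FiniteDimensional K (q ⧸ (q.projectionOnto q' hq).range) := by
    rw [Submodule.range_projectionOnto]; infer_instance
  have : FiniteDimensional K (q.projectionOnto q' hq ∘ₗ f).ker := by
    rw [LinearMap.ker_comp]; infer_instance
  have : FiniteDimensional K (q ⧸ (q.projectionOnto q' hq ∘ₗ f).range) := by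
    rw [LinearMap.range_comp]; infer_instance
  rw [← LinearMap.comp_assoc, LinearMap.index_comp, LinearMap.index_comp,
    index_projectionOnto, index_subtype hp]
  ring

end LinearAlgebra

section EssentialBlock

variable {𝕜 E F : Type*} [NontriviallyNormedField 𝕜]

section TopologicalVectorSpace

variable [AddCommGroup E] [Module 𝕜 E] [TopologicalSpace E]
  [AddCommGroup F] [Module 𝕜 F] [TopologicalSpace F]

/-- The block of `S` between the essential parts of two Fredholm decompositions: the restriction of
`S` to `D.X₁`, followed by the projection onto `D'.X₁` along `D'.X₀`. -/
noncomputable def essentialBlock (D : FredholmDecomposition 𝕜 E) (D' : FredholmDecomposition 𝕜 F)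
    (S : E →L[𝕜] F) : D.X₁ →L[𝕜] D'.X₁ :=
  D'.proj ∘L S ∘L D.X₁.subtypeL

lemma essentialBlock_eq_equiv {T : E →L[𝕜] F} (pkg : T.FredholmPackage) :
    essentialBlock pkg.decDom pkg.decCodom T = pkg.equiv := by
  ext x
  simp [essentialBlock, pkg.eq_equiv]

variable [CompleteSpace 𝕜]
  [IsTopologicalAddGroup E] [ContinuousSMul 𝕜 E] [T2Space E]
  [IsTopologicalAddGroup F] [ContinuousSMul 𝕜 F] [T2Space F]
  {D : FredholmDecomposition 𝕜 E} {D' : FredholmDecomposition 𝕜 F} {S : E →L[𝕜] F}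
  {e : D.X₁ ≃L[𝕜] D'.X₁}

lemma isFredholm_of_essentialBlock_eq (he : essentialBlock D D' S = e) : S.IsFredholm := by
  have := D.finite_X₀
  have := D'.finite_X₀
  have hblock : D'.proj.toLinearMap ∘ₗ S.toLinearMap ∘ₗ D.X₁.subtype = e.toLinearEquiv :=
    congrArg ContinuousLinearMap.toLinearMap he
  have hsubtype : D.proj.toLinearMap.IsQuasiInverse D.X₁.subtype :=
    (LinearMap.isQuasiInverse_subtype_projectionOnto D.isTopCompl.isCompl).symm
  have hproj : D'.X₁.subtype.IsQuasiInverse D'.proj.toLinearMap :=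
    LinearMap.isQuasiInverse_subtype_projectionOnto D'.isTopCompl.isCompl
  let v : F →L[𝕜] E := D.X₁.subtypeL ∘L (e.symm : D'.X₁ →L[𝕜] D.X₁) ∘L D'.proj
  have hv : v.toLinearMap.IsQuasiInverse S.toLinearMap :=
    .of_comp_left hsubtype (.of_comp_right hproj (hblock ▸ e.toLinearEquiv.isQuasiInverse))
  exact .of_isQuasiInverse hv

lemma index_eq_of_essentialBlock_eq (he : essentialBlock D D' S = e) :
    S.index = (finrank 𝕜 D.X₀ : ℤ) - finrank 𝕜 D'.X₀ := by
  have hS := isFredholm_of_essentialBlock_eq he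
  have := hS.finite_ker
  have := hS.finite_coker
  have := D.finite_X₀
  have := D'.finite_X₀
  have hzero : (essentialBlock D D' S).index = 0 := he ▸ e.toLinearEquiv.index_eq_zero
  have hadd : (essentialBlock D D' S).index = S.index + finrank 𝕜 D'.X₀ - finrank 𝕜 D.X₀ :=
    index_projectionOnto_comp_comp_subtype S.toLinearMap D.isTopCompl.isCompl D'.isTopCompl.isCompl
  lia

end TopologicalVectorSpace

variable [NormedAddCommGroup E] [NormedSpace 𝕜 E] [NormedAddCommGroup F] [NormedSpace 𝕜 F]

lemma continuous_essentialBlock (D : FredholmDecomposition 𝕜 E) (D' : FredholmDecomposition 𝕜 F) :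
    Continuous (essentialBlock D D') := by
  unfold essentialBlock
  fun_prop

lemma eventually_exists_essentialBlock_eq [CompleteSpace E] {T : E →L[𝕜] F}
    (pkg : T.FredholmPackage) :
    ∀ᶠ S in 𝓝 T, ∃ e : pkg.decDom.X₁ ≃L[𝕜] pkg.decCodom.X₁,
      essentialBlock pkg.decDom pkg.decCodom S = e := by
  have : CompleteSpace pkg.decDom.X₁ := pkg.decDom.isTopCompl.isClosed.completeSpace_coe
  have hnhds : range ((↑) : (pkg.decDom.X₁ ≃L[𝕜] pkg.decCodom.X₁) → _) ∈
      𝓝 (essentialBlock pkg.decDom pkg.decCodom T) :=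
    essentialBlock_eq_equiv pkg ▸ pkg.equiv.nhds
  filter_upwards [(continuous_essentialBlock _ _).continuousAt hnhds] with S ⟨e, he⟩
  exact ⟨e, he.symm⟩

theorem eventually_index_eq [CompleteSpace 𝕜] [CompleteSpace E] {T : E →L[𝕜] F}
    (hT : T.IsFredholm) : ∀ᶠ S in 𝓝 T, S.index = T.index := by
  obtain ⟨pkg⟩ := hT.nonempty_fredholmPackage
  filter_upwards [eventually_exists_essentialBlock_eq pkg] with S ⟨e, he⟩
  rw [index_eq_of_essentialBlock_eq he, index_eq_of_essentialBlock_eq (essentialBlock_eq_equiv pkg)]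

end EssentialBlock

lemma isStrictMap_of_isClosed_range {𝕜 E F : Type*} [NontriviallyNormedField 𝕜]
    [NormedAddCommGroup E] [NormedSpace 𝕜 E] [CompleteSpace E]
    [NormedAddCommGroup F] [NormedSpace 𝕜 F] [CompleteSpace F]
    {T : E →L[𝕜] F} (hT : IsClosed (T.range : Set F)) : IsStrictMap T := by
  have : CompleteSpace T.range := hT.completeSpace_coe
  have hsurj : Function.Surjective T.rangeRestrict := T.toLinearMap.surjective_rangeRestrict
  exact T.toLinearMap.isStrictMap_iff_isOpenQuotientMap_rangeRestrict.mpr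
    ⟨hsurj, T.rangeRestrict.continuous, T.rangeRestrict.isOpenMap hsurj⟩

lemma IsFredholm.isFredholm_continuousLinearMap {X Y : Type*}
    [NormedAddCommGroup X] [NormedSpace ℝ X] [CompleteSpace X]
    [NormedAddCommGroup Y] [NormedSpace ℝ Y] [CompleteSpace Y]
    {T : X →L[ℝ] Y} (hT : IsFredholm T) : T.IsFredholm := by
  obtain ⟨finite_ker, isClosed_range, finite_coker⟩ := hT
  exact ⟨isStrictMap_of_isClosed_range isClosed_range, isClosed_range, finite_ker, finite_coker,
    .of_finiteDimensional _⟩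

theorem index_zero_of_connected_general {𝕜 E F Z : Type*}
    [NontriviallyNormedField 𝕜] [CompleteSpace 𝕜]
    [NormedAddCommGroup E] [NormedSpace 𝕜 E] [CompleteSpace E]
    [NormedAddCommGroup F] [NormedSpace 𝕜 F] [TopologicalSpace Z] [PreconnectedSpace Z]
    {T : Z → E →L[𝕜] F} (hT : Continuous T) (hFred : ∀ z, (T z).IsFredholm) (z z' : Z) :
    (T z).index = (T z').index := by
  have hloc : IsLocallyConstant fun z ↦ (T z).index :=
    (IsLocallyConstant.iff_eventually_eq _).mpr fun z ↦
      hT.continuousAt.eventually (eventually_index_eq (hFred z))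
  exact hloc.apply_eq_of_preconnectedSpace z z'

/-- The Fredholm index `dim ker T - codim range T` is locally constant, hence constant along a
continuous family of Fredholm operators parametrized by a connected space: if the index is `0`
at one parameter value, it is `0` everywhere. -/
theorem index_zero_of_connected {X Y : Type*}
    [NormedAddCommGroup X] [NormedSpace ℝ X] [CompleteSpace X]
    [NormedAddCommGroup Y] [NormedSpace ℝ Y] [CompleteSpace Y]
    {Z : Type*} [TopologicalSpace Z] [ConnectedSpace Z]
    (T : Z → X →L[ℝ] Y) (hT : Continuous T)
    (hFred : ∀ z : Z, IsFredholm (T z))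
    (z₀ : Z)
    (h0 : (Module.finrank ℝ (LinearMap.ker (T z₀ : X →ₗ[ℝ] Y)) : ℤ) -
        (Module.finrank ℝ (Y ⧸ LinearMap.range (T z₀ : X →ₗ[ℝ] Y)) : ℤ) = 0) :
    ∀ z : Z, (Module.finrank ℝ (LinearMap.ker (T z : X →ₗ[ℝ] Y)) : ℤ) -
        (Module.finrank ℝ (Y ⧸ LinearMap.range (T z : X →ₗ[ℝ] Y)) : ℤ) = 0 := by
  intro z
  rw [← LinearMap.index_eq_finrank_sub] at h0 ⊢
  rw [← h0]
  exact index_zero_of_connected_general hT (fun z ↦ (hFred z).isFredholm_continuousLinearMap) z z₀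
end
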